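/- arXiv:2209.04816 — 7 statements merged into one kernel-verified Lean document; each statement's English description precedes it below -/
import Mathlib

section
/- Let a, b, c, d ∈ ℂ with ad − bc ≠ 0, and let ξ(z) = (az + b)/(cz + d). Then ξ is a self-mapping of the open unit disk 𝔻 (i.e., cz + d ≠ 0 and |ξ(z)| < 1 for every z ∈ 𝔻) if and only if |b·conj(d) − a·conj(c)| + |ad − bc| ≤ |d|² − |c|². -/
open Complex ComplexConjugate

lemma aux_u (Q D : ℂ) (hD : D ≠ 0) : ∃ u : ℂ, ‖u‖ = 1 ∧ ‖Q + D * u‖ = ‖Q‖ + ‖D‖ := by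
  by_cases hQ : Q = 0
  · exact ⟨1, by simp, by simp [hQ]⟩
  have hQ' : ‖Q‖ ≠ 0 := norm_ne_zero_iff.2 hQ
  have hD' : ‖D‖ ≠ 0 := norm_ne_zero_iff.2 hD
  have hQc : (‖Q‖ : ℂ) ≠ 0 := by exact_mod_cast hQ'
  refine ⟨Q * ‖D‖ / (‖Q‖ * D), ?_, ?_⟩
  · simp only [norm_div, norm_mul, Complex.norm_real, norm_norm]
    field_simp
  · have : Q + D * (Q * ‖D‖ / (‖Q‖ * D)) = Q * ((1 + ‖D‖ / ‖Q‖ : ℝ) : ℂ) := by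
      push_cast
      field_simp
    rw [this, norm_mul, Complex.norm_real, Real.norm_of_nonneg (by positivity)]
    field_simp

lemma aux_id (a b c d z : ℂ) :
    ((‖d‖ ^ 2 - ‖c‖ ^ 2 : ℝ) : ℂ) * (a * z + b) =
      (b * conj d - a * conj c) * (c * z + d) + (a * d - b * c) * (conj d * z + conj c) := by
  push_cast
  rw [← Complex.mul_conj', ← Complex.mul_conj']
  ring

lemma aux_norm (c d z : ℂ) :
    ‖c * z + d‖ ^ 2 - ‖conj d * z + conj c‖ ^ 2 = (‖d‖ ^ 2 - ‖c‖ ^ 2) * (1 - ‖z‖ ^ 2) := by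
  simp only [← Complex.normSq_eq_norm_sq, Complex.normSq_apply, Complex.add_re, Complex.add_im,
    Complex.mul_re, Complex.mul_im, Complex.conj_re, Complex.conj_im]
  ring

theorem stmt_1 (a b c d : ℂ) (h : a * d - b * c ≠ 0) :
    (∀ z : ℂ, ‖z‖ < 1 → c * z + d ≠ 0 ∧ ‖(a * z + b) / (c * z + d)‖ < 1) ↔
      ‖b * conj d - a * conj c‖ + ‖a * d - b * c‖ ≤ ‖d‖ ^ 2 - ‖c‖ ^ 2 := by
  have hDpos : 0 < ‖a * d - b * c‖ := norm_pos_iff.2 h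
  constructor
  · intro H
    have H1 : ∀ z : ℂ, ‖z‖ ≤ 1 → ‖a * z + b‖ ≤ ‖c * z + d‖ := by
      have hcl : IsClosed {z : ℂ | ‖a * z + b‖ ≤ ‖c * z + d‖} :=
        isClosed_le (by fun_prop) (by fun_prop)
      have hsub : Metric.ball (0 : ℂ) 1 ⊆ {z : ℂ | ‖a * z + b‖ ≤ ‖c * z + d‖} := by
        intro z hz
        obtain ⟨h1, h2⟩ := H z (by simpa using hz)
        rw [norm_div, div_lt_one (norm_pos_iff.2 h1)] at h2
        exact h2.le
      have := hcl.closure_subset_iff.2 hsub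
      rw [closure_ball _ one_ne_zero] at this
      intro z hz
      exact this (by simpa using hz)
    have hcd : ‖c‖ < ‖d‖ := by
      by_contra! hle
      have hc : c ≠ 0 := by
        rintro rfl
        have : d = 0 := by simpa using hle
        simp [this] at h
      have hz : ‖-d / c‖ ≤ 1 := by
        rw [norm_div, norm_neg]
        exact div_le_one_of_le₀ hle (norm_nonneg _)
      have h1 := H1 _ hz
      have h2 : c * (-d / c) + d = 0 := by field_simp; ring
      rw [h2, norm_zero, norm_le_zero_iff] at h1
      apply h
      field_simp at h1
      linear_combination -h1
    have hP : 0 < ‖d‖ ^ 2 - ‖c‖ ^ 2 := by nlinarith [norm_nonneg c]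
    obtain ⟨u, hu, hQ⟩ := aux_u (b * conj d - a * conj c) _ h
    have huu : u * conj u = 1 := by rw [Complex.mul_conj', hu]; simp
    have he : conj d - u * c ≠ 0 := by
      intro h0
      have : ‖conj d‖ = ‖u * c‖ := by rw [sub_eq_zero.1 h0]
      rw [norm_mul, hu, one_mul, Complex.norm_conj] at this
      exact hcd.ne' this
    have hn : ‖u * d - conj c‖ = ‖conj d - u * c‖ := by
      have : u * d - conj c = u * conj (conj d - u * c) := by
        simp only [map_sub, map_mul, Complex.conj_conj]
        linear_combination conj c * huu
      rw [this, norm_mul, hu, one_mul, Complex.norm_conj]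
    set w := (u * d - conj c) / (conj d - u * c) with hw
    have hw1 : ‖w‖ ≤ 1 := by
      rw [hw, norm_div, hn]; exact div_self_le_one _
    have hwe : w * (conj d - u * c) = u * d - conj c := div_mul_cancel₀ _ he
    have h3 : (c * w + d) * (conj d - u * c) = ((‖d‖ ^ 2 - ‖c‖ ^ 2 : ℝ) : ℂ) := by
      push_cast
      rw [← Complex.mul_conj', ← Complex.mul_conj']
      linear_combination c * hwe
    have h4 : c * w + d ≠ 0 := by
      intro h0
      rw [h0, zero_mul] at h3
      exact hP.ne (by exact_mod_cast h3)
    have h5 : ((‖d‖ ^ 2 - ‖c‖ ^ 2 : ℝ) : ℂ) * (a * w + b) =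
        ((b * conj d - a * conj c) + (a * d - b * c) * u) * (c * w + d) := by
      rw [aux_id]
      linear_combination (a * d - b * c) * hwe
    have h6 := congrArg norm h5
    rw [norm_mul, norm_mul, hQ, Complex.norm_real, Real.norm_of_nonneg hP.le] at h6
    refine le_of_mul_le_mul_right ?_ (norm_pos_iff.2 h4)
    rw [← h6]
    exact mul_le_mul_of_nonneg_left (H1 w hw1) hP.le
  · intro H z hz
    have hP : 0 < ‖d‖ ^ 2 - ‖c‖ ^ 2 := by linarith [norm_nonneg (b * conj d - a * conj c)]
    have h1 := aux_norm c d z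
    have h2 : 0 < (‖d‖ ^ 2 - ‖c‖ ^ 2) * (1 - ‖z‖ ^ 2) :=
      mul_pos hP (by nlinarith [norm_nonneg z])
    have h3 : ‖conj d * z + conj c‖ < ‖c * z + d‖ :=
      lt_of_pow_lt_pow_left₀ 2 (norm_nonneg _) (by linarith)
    have h4 : 0 < ‖c * z + d‖ := lt_of_le_of_lt (norm_nonneg _) h3
    refine ⟨norm_pos_iff.1 h4, ?_⟩
    rw [norm_div, div_lt_one h4]
    have h5 := congrArg norm (aux_id a b c d z)
    rw [norm_mul, Complex.norm_real, Real.norm_of_nonneg hP.le] at h5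
    have h6 := norm_add_le ((b * conj d - a * conj c) * (c * z + d))
      ((a * d - b * c) * (conj d * z + conj c))
    rw [norm_mul, norm_mul] at h6
    refine lt_of_mul_lt_mul_left ?_ hP.le
    have h7 := mul_lt_mul_of_pos_left h3 hDpos
    have h8 := mul_le_mul_of_nonneg_right H h4.le
    rw [add_mul] at h8
    linarith
end

section
/- Let ψ : 𝔻 → 𝔻 be an analytic function satisfying ψ'(u)·(1 − u·conj(ψ(z)))² = conj(ψ'(z))·(1 − ψ(u)·conj(z))² for all z, u ∈ 𝔻. Then there exist a ∈ 𝔻 and b ∈ ℝ with |a·(b − |a|² + 1)| + |b| ≤ 1 − |a|², such that ψ(z) = a + b·z/(1 − conj(a)·z) for all z ∈ 𝔻. -/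
open Complex ComplexConjugate

theorem aux_ne (a z : ℂ) (ha : ‖a‖ < 1) (hz : ‖z‖ < 1) : 1 - conj a * z ≠ 0 := by
  intro h
  have h1 : conj a * z = 1 := by linear_combination -h
  have h2 : ‖a‖ * ‖z‖ = 1 := by
    have := congrArg norm h1
    simpa using this
  nlinarith [norm_nonneg a, norm_nonneg z]

theorem aux_mob (a z : ℂ) (ha : ‖a‖ < 1) (hz : ‖z‖ < 1) :
    ‖(z + a) / (1 + conj a * z)‖ < 1 := by
  have hne : 1 + conj a * z ≠ 0 := by
    have := aux_ne (-a) z (by simpa using ha) hz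
    simpa using this
  rw [norm_div, div_lt_one (norm_pos_iff.mpr hne)]
  apply lt_of_pow_lt_pow_left₀ 2 (norm_nonneg _)
  have h1 : ‖a‖ ^ 2 < 1 := by nlinarith [norm_nonneg a]
  have h2 : ‖z‖ ^ 2 < 1 := by nlinarith [norm_nonneg z]
  rw [← normSq_eq_norm_sq, normSq_apply] at *
  rw [← normSq_eq_norm_sq, normSq_apply] at *
  simp at *
  nlinarith [mul_pos (sub_pos.mpr h1) (sub_pos.mpr h2)]

theorem stmt_3 (ψ : ℂ → ℂ)
    (hψ : AnalyticOnNhd ℂ ψ (Metric.ball 0 1))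
    (hmap : ∀ z ∈ Metric.ball (0 : ℂ) 1, ψ z ∈ Metric.ball (0 : ℂ) 1)
    (heq : ∀ z ∈ Metric.ball (0 : ℂ) 1, ∀ u ∈ Metric.ball (0 : ℂ) 1,
      deriv ψ u * (1 - u * conj (ψ z)) ^ 2 =
        conj (deriv ψ z) * (1 - ψ u * conj z) ^ 2) :
    ∃ (a : ℂ) (b : ℝ), ‖a‖ < 1 ∧
      ‖a * ((b : ℂ) - (‖a‖ : ℂ) ^ 2 + 1)‖ + |b| ≤ 1 - ‖a‖ ^ 2 ∧
      ∀ z ∈ Metric.ball (0 : ℂ) 1, ψ z = a + (b : ℂ) * z / (1 - conj a * z) := by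
  have h0 : (0 : ℂ) ∈ Metric.ball (0 : ℂ) 1 := by simp
  obtain ⟨a, haψ⟩ : ∃ a, a = ψ 0 := ⟨_, rfl⟩
  have ha : ‖a‖ < 1 := by simpa [← haψ] using hmap 0 h0
  obtain ⟨b, hb⟩ : ∃ b : ℝ, deriv ψ 0 = b := by
    have := heq 0 h0 0 h0
    simp at this
    exact Complex.conj_eq_iff_real.mp this.symm
  have hd : ∀ u ∈ Metric.ball (0 : ℂ) 1, deriv ψ u = b / (1 - conj a * u) ^ 2 := by
    intro u hu
    have := heq 0 h0 u hu
    have hne := aux_ne a u ha (by simpa using hu)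
    simp [hb, ← haψ] at this
    rw [eq_div_iff (pow_ne_zero 2 hne), ← this]
    ring
  have hF : ∀ z ∈ Metric.ball (0 : ℂ) 1,
      HasDerivAt (fun z => a + (b : ℂ) * z / (1 - conj a * z)) (b / (1 - conj a * z) ^ 2) z := by
    intro z hz
    have hne := aux_ne a z ha (by simpa using hz)
    have h1 : HasDerivAt (fun z : ℂ => (b : ℂ) * z) b z := by
      simpa using (hasDerivAt_id z).const_mul (b : ℂ)
    have h2 : HasDerivAt (fun z : ℂ => 1 - conj a * z) (-conj a) z := by
      simpa using ((hasDerivAt_id z).const_mul (conj a)).const_sub 1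
    refine ((h1.div h2 hne).const_add a).congr_deriv ?_
    congr 1
    ring
  have hform : ∀ z ∈ Metric.ball (0 : ℂ) 1, ψ z = a + (b : ℂ) * z / (1 - conj a * z) := by
    have := Metric.isOpen_ball.eqOn_of_deriv_eq (convex_ball (0:ℂ) 1).isPreconnected
      hψ.differentiableOn (fun z hz => (hF z hz).differentiableAt.differentiableWithinAt)
      (fun z hz => by rw [hd z hz, (hF z hz).deriv]) h0 (by simp [haψ])
    exact this
  refine ⟨a, b, ha, ?_, hform⟩
  have hpos : 0 < 1 - ‖a‖ ^ 2 := by nlinarith [norm_nonneg a]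
  have haa : conj a * a = (‖a‖ : ℂ) ^ 2 := Complex.conj_mul' a
  have hposC : (1 : ℂ) - (‖a‖ : ℂ) ^ 2 ≠ 0 := by
    exact_mod_cast hpos.ne'
  set A : ℂ := a * ((b : ℂ) - (‖a‖ : ℂ) ^ 2 + 1) with hA
  have key : ∀ ζ : ℂ, ‖ζ‖ < 1 → ‖A + b * ζ‖ ≤ 1 - ‖a‖ ^ 2 := by
    intro ζ hζ
    have hm := aux_mob a ζ ha hζ
    have hne : 1 + conj a * ζ ≠ 0 := by
      have := aux_ne (-a) ζ (by simpa using ha) hζ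
      simpa using this
    have hmem : (ζ + a) / (1 + conj a * ζ) ∈ Metric.ball (0 : ℂ) 1 := by simpa using hm
    have h1 := hmap _ hmem
    have hden : 1 - conj a * ((ζ + a) / (1 + conj a * ζ))
        = (1 - (‖a‖ : ℂ) ^ 2) / (1 + conj a * ζ) := by
      rw [← haa]; field_simp; ring
    have h2 : ψ ((ζ + a) / (1 + conj a * ζ)) = (A + b * ζ) / (1 - (‖a‖ : ℂ) ^ 2) := by
      rw [hform _ hmem, hden, hA, mul_div_assoc, div_div_div_cancel_right₀ hne]
      field_simp
      ring
    rw [h2, mem_ball_zero_iff, norm_div] at h1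
    have h3 : ‖(1 : ℂ) - (‖a‖ : ℂ) ^ 2‖ = 1 - ‖a‖ ^ 2 := by
      have : (1 : ℂ) - (‖a‖ : ℂ) ^ 2 = ((1 - ‖a‖ ^ 2 : ℝ) : ℂ) := by push_cast; rfl
      rw [this, Complex.norm_real, Real.norm_of_nonneg hpos.le]
    rw [h3, div_lt_one hpos] at h1
    exact h1.le
  obtain ⟨s, hs1, hs2⟩ : ∃ s : ℝ, |s| = 1 ∧ b * s = |b| := by
    rcases le_total 0 b with h | h
    · exact ⟨1, by simp, by simp [abs_of_nonneg h]⟩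
    · exact ⟨-1, by simp, by simp [abs_of_nonpos h]⟩
  have hpol := Complex.norm_mul_exp_arg_mul_I A
  have ht : ∀ t ∈ Set.Ico (0:ℝ) 1, ‖A‖ + t * |b| ≤ 1 - ‖a‖ ^ 2 := by
    intro t ht
    have hk := key (t * s * exp (A.arg * I)) (by
      rw [norm_mul, Complex.norm_exp_ofReal_mul_I]
      simp [hs1, abs_of_nonneg ht.1, ht.2])
    have : A + b * (t * s * exp (A.arg * I)) = ((‖A‖ + t * |b| : ℝ) : ℂ) * exp (A.arg * I) := by
      rw [← hs2]
      push_cast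
      linear_combination -hpol
    rw [this, norm_mul, Complex.norm_exp_ofReal_mul_I, Complex.norm_real, mul_one,
      Real.norm_of_nonneg (by have := ht.1; positivity)] at hk
    exact hk
  by_contra! hcon
  have hA0 := ht 0 (by simp)
  have hbpos : 0 < |b| := by nlinarith
  -- choose t close to 1
  have h5 : (1 - ‖a‖ ^ 2 - ‖A‖) / |b| < 1 := by
    rw [div_lt_one hbpos]; linarith
  obtain ⟨t, ht1, ht2⟩ := exists_between h5
  have h6 : 0 ≤ (1 - ‖a‖ ^ 2 - ‖A‖) / |b| := by
    apply div_nonneg _ hbpos.le; linarith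
  have := ht t ⟨by linarith, ht2⟩
  rw [div_lt_iff₀ hbpos] at ht1
  linarith
end

section
/- Let θ ∈ 𝕋 and let ψ : 𝔻 → 𝔻 be an analytic function satisfying ψ'(y)·(1 − θ·y·ψ(x))² = ψ'(x)·(1 − θ·ψ(y)·x)² for all x, y ∈ 𝔻. Then there exist α₀, α₁ ∈ ℂ with |α₀ + conj(α₀)·(α₁ − α₀²)| + |α₁| ≤ 1 − |α₀|², such that ψ(z) = α₀ + α₁·θ·z/(1 − α₀·θ·z) for all z ∈ 𝔻. -/
open Complex ComplexConjugate

lemma phase_aux (z : ℂ) : ∃ e : ℂ, ‖e‖ = 1 ∧ z = e * (‖z‖ : ℂ) :=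
  ⟨exp (arg z * I), Complex.norm_exp_ofReal_mul_I _, by
    rw [mul_comm]; exact (Complex.norm_mul_exp_arg_mul_I z).symm⟩

lemma one_sub_ne (u v : ℂ) (hu : ‖u‖ < 1) (hv : ‖v‖ < 1) : 1 - u * v ≠ 0 := by
  intro h
  have h1 : u * v = 1 := (sub_eq_zero.mp h).symm
  have h2 : ‖u‖ * ‖v‖ = 1 := by rw [← norm_mul, h1, norm_one]
  nlinarith [norm_nonneg u, norm_nonneg v]

lemma mobius_aux (a u : ℂ) (ha : ‖a‖ < 1) (hu : ‖u‖ < 1) :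
    ‖(u + conj a) / (1 + a * u)‖ < 1 := by
  have hne : 1 + a * u ≠ 0 := by
    have := one_sub_ne (-a) u (by simpa using ha) hu
    intro h; apply this; rw [← h]; ring
  rw [norm_div, div_lt_one (norm_pos_iff.mpr hne)]
  apply lt_of_pow_lt_pow_left₀ 2 (norm_nonneg _)
  have ha2 : Complex.normSq a < 1 := by
    rw [Complex.normSq_eq_norm_sq]; nlinarith [norm_nonneg a]
  have hu2 : Complex.normSq u < 1 := by
    rw [Complex.normSq_eq_norm_sq]; nlinarith [norm_nonneg u]
  rw [← Complex.normSq_eq_norm_sq, ← Complex.normSq_eq_norm_sq]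
  rw [Complex.normSq_apply] at *
  simp only [Complex.normSq_apply, add_re, add_im, mul_re, mul_im, conj_re, conj_im, one_re, one_im] at *
  nlinarith [mul_pos (sub_pos.mpr ha2) (sub_pos.mpr hu2)]

theorem stmt_4 (θ : ℂ) (hθ : ‖θ‖ = 1) (ψ : ℂ → ℂ)
    (hψ : AnalyticOnNhd ℂ ψ (Metric.ball 0 1))
    (hmap : ∀ z ∈ Metric.ball (0 : ℂ) 1, ψ z ∈ Metric.ball (0 : ℂ) 1)
    (heq : ∀ x ∈ Metric.ball (0 : ℂ) 1, ∀ y ∈ Metric.ball (0 : ℂ) 1,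
      deriv ψ y * (1 - θ * y * ψ x) ^ 2 = deriv ψ x * (1 - θ * ψ y * x) ^ 2) :
    ∃ α₀ α₁ : ℂ,
      ‖α₀ + conj α₀ * (α₁ - α₀ ^ 2)‖ + ‖α₁‖ ≤ 1 - ‖α₀‖ ^ 2 ∧
      ∀ z ∈ Metric.ball (0 : ℂ) 1, ψ z = α₀ + α₁ * θ * z / (1 - α₀ * θ * z) := by
  have hθ0 : θ ≠ 0 := by
    intro h; simp [h] at hθ
  have h0 : (0 : ℂ) ∈ Metric.ball (0 : ℂ) 1 := by simp
  have ha : ‖ψ 0‖ < 1 := by simpa using hmap 0 h0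
  have hD := heq 0 h0
  generalize haa : ψ 0 = a at *
  generalize deriv ψ 0 = c at *
  have hne : ∀ z ∈ Metric.ball (0 : ℂ) 1, 1 - a * θ * z ≠ 0 := by
    intro z hz
    exact one_sub_ne (a * θ) z (by simpa [hθ] using ha) (by simpa using hz)
  have hform : ∀ z ∈ Metric.ball (0 : ℂ) 1, ψ z = a + (c / θ) * θ * z / (1 - a * θ * z) := by
    have hd : ∀ z ∈ Metric.ball (0 : ℂ) 1,
        HasDerivAt (fun z => ψ z - c * z / (1 - a * θ * z)) 0 z := by
      intro z hz
      have h1 := (hψ z hz).differentiableAt.hasDerivAt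
      have h2 : HasDerivAt (fun z : ℂ => c * z) c z := by
        simpa using (hasDerivAt_id z).const_mul c
      have h3 : HasDerivAt (fun z : ℂ => 1 - a * θ * z) (-(a * θ)) z := by
        simpa using ((hasDerivAt_id z).const_mul (a * θ)).const_sub 1
      have h4 := h1.sub (h2.div h3 (hne z hz))
      refine HasDerivAt.congr_deriv (f := fun z => ψ z - c * z / (1 - a * θ * z)) h4 ?_
      have h5 := hD z hz
      have h6 := hne z hz
      have h7 : deriv ψ z = c / (1 - a * θ * z) ^ 2 := by
        rw [eq_div_iff (pow_ne_zero 2 h6)]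
        linear_combination h5
      rw [h7]
      field_simp
      ring
    intro z hz
    have hc := Metric.isOpen_ball.is_const_of_deriv_eq_zero (convex_ball (0:ℂ) 1).isPreconnected
      (fun w hw => (hd w hw).differentiableAt.differentiableWithinAt)
      (fun w hw => (hd w hw).deriv) hz h0
    simp only [mul_zero, zero_div, sub_zero, haa] at hc
    rw [div_mul_cancel₀ c hθ0]
    linear_combination hc
  refine ⟨a, c / θ, ?_, hform⟩
  generalize c / θ = b at *
  set s : ℝ := 1 - ‖a‖ ^ 2 with hs
  have hspos : 0 < s := by rw [hs]; nlinarith [norm_nonneg a]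
  have hsc : (s : ℂ) = 1 - a * conj a := by
    rw [hs, Complex.mul_conj, Complex.normSq_eq_norm_sq]; push_cast; ring
  have hs0 : (1 - a * conj a) ≠ 0 := by rw [← hsc]; exact_mod_cast hspos.ne'
  set C := a + conj a * (b - a ^ 2) with hC
  have key : ∀ u : ℂ, ‖u‖ < 1 → ‖C + b * u‖ < s := by
    intro u hu
    have hw := mobius_aux a u ha hu
    have h1 : 1 + a * u ≠ 0 := by
      have := one_sub_ne (-a) u (by simpa using ha) hu
      intro h; apply this; rw [← h]; ring
    set w := (u + conj a) / (1 + a * u) with hwd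
    have hz : w / θ ∈ Metric.ball (0 : ℂ) 1 := by simpa [hθ] using hw
    have h2 := hmap _ hz
    rw [hform _ hz] at h2
    have e1 : a * θ * (w / θ) = a * w := by field_simp
    have e2 : b * θ * (w / θ) = b * w := by field_simp
    rw [e1, e2] at h2
    have e3 : 1 - a * w = (1 - a * conj a) / (1 + a * u) := by
      rw [hwd]; field_simp; ring
    have e4 : a + b * w / (1 - a * w) = (C + b * u) / s := by
      rw [e3, hsc, hwd, hC]; field_simp; ring
    rw [e4, mem_ball_zero_iff, norm_div, Complex.norm_real, Real.norm_of_nonneg hspos.le,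
      div_lt_one hspos] at h2
    exact h2
  obtain ⟨e, he, hCe⟩ := phase_aux C
  obtain ⟨f, hf, hbf⟩ := phase_aux b
  have hf0 : f ≠ 0 := by intro h; simp [h] at hf
  have key2 : ∀ t : ℝ, 0 ≤ t → t < 1 → ‖C‖ + t * ‖b‖ < s := by
    intro t ht ht1
    have h := key (t * (e / f)) (by simp [he, hf, abs_of_nonneg ht, ht1])
    have e5 : C + b * (t * (e / f)) = e * ((‖C‖ + t * ‖b‖ : ℝ) : ℂ) := by
      have : b * (t * (e / f)) = e * (t * ‖b‖) := by
        conv_lhs => rw [hbf]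
        field_simp
      rw [this]
      conv_lhs => rw [hCe]
      push_cast; ring
    rw [e5, norm_mul, he, one_mul, Complex.norm_real, Real.norm_of_nonneg (by positivity)] at h
    exact h
  by_contra! hcon
  have hC0 := key2 0 le_rfl one_pos
  have hbpos : 0 < ‖b‖ := by linarith
  have := key2 ((s - ‖C‖) / ‖b‖) (div_nonneg (by linarith) hbpos.le)
    ((div_lt_one hbpos).mpr (by linarith))
  rw [div_mul_cancel₀ _ hbpos.ne'] at this
  linarith
end

section
/- Let d ≥ 1, ℓ ∈ ℤ_{≥0}^d, and let {U₁, U₂} be a partition of {1,…,d}. Let p_j ∈ 𝔻 \ {0} for j ∈ U₁ and q_j ∈ 𝕋 for j ∈ U₂, and define ω = (ω₁,…,ω_d) : 𝔻^d → 𝔻^d by ω_j(z) = (conj(p_j)/p_j)·(p_j − z_j)/(1 − conj(p_j)·z_j) if j ∈ U₁ and ω_j(z) = q_j·z_j if j ∈ U₂, and define ϑ(z) = ∏_{j∈U₁} (1 − |p_j|²)^{1+ℓ_j/2}/(1 − conj(p_j)·z_j)^{ℓ_j+2}. Then for every analytic function h : 𝔻^d → ℂ, ∫_{𝔻^d} |ϑ(z)|²·|h(conj(ω(z)))|²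 ∏_{j=1}^d (1+ℓ_j)(1−|z_j|²)^{ℓ_j} dA(z₁)⋯dA(z_d) = ∫_{𝔻^d} |h(x)|² ∏_{j=1}^d (1+ℓ_j)(1−|x_j|²)^{ℓ_j} dA(x₁)⋯dA(x_d) (as an equality in [0,∞]). -/
open MeasureTheory Complex ComplexConjugate

/-- The normalized area measure on `ℂ` (planar Lebesgue measure divided by `π`). -/
noncomputable def dA : Measure ℂ := (ENNReal.ofReal Real.pi)⁻¹ • volume

/-- The Moebius involution. -/
noncomputable def phiM (p z : ℂ) : ℂ := (p - z) / (1 - conj p * z)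

/-- The one-variable map. -/
noncomputable def tauM (p c z : ℂ) : ℂ := conj (c * phiM p z)

/-- Its real derivative. -/
noncomputable def dtauM (p c z : ℂ) : ℂ →L[ℝ] ℂ :=
  (conjCLE : ℂ →L[ℝ] ℂ) ∘L (ContinuousLinearMap.toSpanSingleton ℂ
    (c * ((-1 * (1 - conj p * z) - (p - z) * (-(conj p))) / (1 - conj p * z) ^ 2))).restrictScalars ℝ

lemma den_ne {p z : ℂ} (hp : ‖p‖ < 1) (hz : ‖z‖ < 1) : 1 - conj p * z ≠ 0 := by
  intro h
  have h1 : ‖conj p * z‖ = 1 := by rw [← sub_eq_zero.mp h]; simp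
  rw [norm_mul, RCLike.norm_conj] at h1
  nlinarith [norm_nonneg p, norm_nonneg z]

lemma mob_id (p z : ℂ) : ‖1 - conj p * z‖ ^ 2 - ‖p - z‖ ^ 2 = (1 - ‖p‖ ^ 2) * (1 - ‖z‖ ^ 2) := by
  simp only [← Complex.normSq_eq_norm_sq, Complex.normSq_apply]
  simp
  ring

lemma one_sub_tau {p c z : ℂ} (hp : ‖p‖ < 1) (hc : ‖c‖ = 1) (hz : ‖z‖ < 1) :
    1 - ‖tauM p c z‖ ^ 2 = (1 - ‖p‖ ^ 2) * (1 - ‖z‖ ^ 2) / ‖1 - conj p * z‖ ^ 2 := by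
  have h : ‖1 - conj p * z‖ ≠ 0 := norm_ne_zero_iff.mpr (den_ne hp hz)
  rw [← mob_id, tauM, RCLike.norm_conj, norm_mul, hc, phiM, norm_div]
  generalize ‖1 - conj p * z‖ = N at h
  field_simp

lemma tau_lt {p c z : ℂ} (hp : ‖p‖ < 1) (hc : ‖c‖ = 1) (hz : ‖z‖ < 1) : ‖tauM p c z‖ < 1 := by
  have h : 0 < ‖1 - conj p * z‖ := norm_pos_iff.mpr (den_ne hp hz)
  have h1 := one_sub_tau hp hc hz
  have : 0 < (1 - ‖p‖ ^ 2) * (1 - ‖z‖ ^ 2) / ‖1 - conj p * z‖ ^ 2 := by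
    have a : 0 < 1 - ‖p‖ ^ 2 := by nlinarith [norm_nonneg p]
    have b : 0 < 1 - ‖z‖ ^ 2 := by nlinarith [norm_nonneg z]
    positivity
  nlinarith [norm_nonneg (tauM p c z)]

lemma phi_phi {p z : ℂ} (hp : ‖p‖ < 1) (hz : ‖z‖ < 1) : phiM p (phiM p z) = z := by
  have h := den_ne hp hz
  have h2 := den_ne hp hp
  have e1 : 1 - conj p * phiM p z = (1 - conj p * p) / (1 - conj p * z) := by
    rw [phiM, eq_div_iff h, sub_mul, mul_assoc, div_mul_cancel₀ _ h]; ring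
  have e2 : p - phiM p z = z * (1 - conj p * p) / (1 - conj p * z) := by
    rw [phiM, eq_div_iff h, sub_mul, div_mul_cancel₀ _ h]; ring
  rw [phiM, e1, e2, div_div_div_cancel_right₀ h, mul_div_cancel_right₀ _ h2]

lemma phi_lt {p z : ℂ} (hp : ‖p‖ < 1) (hz : ‖z‖ < 1) : ‖phiM p z‖ < 1 := by
  have := tau_lt (c := 1) hp (by simp) hz
  simpa [tauM] using this

lemma det_dtau {p c z : ℂ} (hp : ‖p‖ < 1) (hc : ‖c‖ = 1) :
    |(dtauM p c z).det| = (1 - ‖p‖ ^ 2) ^ 2 / (‖1 - conj p * z‖ ^ 2) ^ 2 := by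
  have e : c * ((-1 * (1 - conj p * z) - (p - z) * (-(conj p))) / (1 - conj p * z) ^ 2)
      = c * (-((1 - ‖p‖ ^ 2 : ℝ) : ℂ) / (1 - conj p * z) ^ 2) := by
    congr 2
    push_cast
    rw [← Complex.mul_conj']
    ring
  have e3 : ‖((1 - ‖p‖ ^ 2 : ℝ) : ℂ)‖ = 1 - ‖p‖ ^ 2 := by
    rw [Complex.norm_real, Real.norm_of_nonneg]
    nlinarith [norm_nonneg p]
  rw [dtauM, e]
  simp only [ContinuousLinearMap.det, ContinuousLinearMap.toLinearMap_comp, LinearMap.det_comp,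
    ContinuousLinearMap.coe_restrictScalars, LinearMap.det_restrictScalars, abs_mul]
  have e4 : |LinearMap.det ((conjCLE : ℂ →L[ℝ] ℂ) : ℂ →ₗ[ℝ] ℂ)| = 1 := by simp
  rw [e4, Algebra.norm_complex_eq]
  simp only [one_mul]
  simp [-Complex.ofReal_sub, Complex.normSq_eq_norm_sq, hc]
  rw [div_pow, sq_abs]

lemma hasFDerivAt_tau {p c z : ℂ} (hp : ‖p‖ < 1) (hz : ‖z‖ < 1) :
    HasFDerivAt (tauM p c) (dtauM p c z) z := by
  have h1 : HasDerivAt (fun z => c * phiM p z)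
      (c * ((-1 * (1 - conj p * z) - (p - z) * (-(conj p))) / (1 - conj p * z) ^ 2)) z := by
    refine HasDerivAt.const_mul c (HasDerivAt.div ?_ ?_ (den_ne hp hz))
    · simpa using (hasDerivAt_id z).const_sub p
    · simpa using ((hasDerivAt_id z).const_mul (conj p)).const_sub 1
  exact (conjCLE : ℂ →L[ℝ] ℂ).hasFDerivAt.comp z (h1.hasFDerivAt.restrictScalars ℝ)

instance dA_haar : dA.IsAddHaarMeasure := by
  unfold dA
  apply Measure.IsAddHaarMeasure.smul
  · simp
  · simp [Real.pi_pos]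

instance dA_sf : SigmaFinite dA := inferInstance

lemma change_var (d : ℕ) (P c : Fin d → ℂ) (hP : ∀ j, ‖P j‖ < 1) (hc : ∀ j, ‖c j‖ = 1)
    (F : (Fin d → ℂ) → ENNReal) :
    (∫⁻ x in {x : Fin d → ℂ | ∀ j, ‖x j‖ < 1}, F x ∂(Measure.pi fun _ => dA)) =
    ∫⁻ z in {x : Fin d → ℂ | ∀ j, ‖x j‖ < 1},
      ENNReal.ofReal (∏ j, (1 - ‖P j‖ ^ 2) ^ 2 / (‖1 - conj (P j) * z j‖ ^ 2) ^ 2)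
        * F (fun j => tauM (P j) (c j) (z j)) ∂(Measure.pi fun _ => dA) := by
  have hm : MeasurableSet {x : Fin d → ℂ | ∀ j, ‖x j‖ < 1} := by
    rw [Set.ofPred_forall]
    exact MeasurableSet.iInter fun j => measurableSet_lt (by fun_prop) (by fun_prop)
  have hinv : ∀ j z, ‖z‖ < 1 → phiM (P j) ((c j)⁻¹ * conj (tauM (P j) (c j) z)) = z := by
    intro j z hz
    have : c j ≠ 0 := by rw [← norm_ne_zero_iff, hc]; simp
    rw [tauM, Complex.conj_conj, inv_mul_cancel_left₀ this, phi_phi (hP j) hz]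
  have hinj : Set.InjOn (fun (z : Fin d → ℂ) j => tauM (P j) (c j) (z j))
      {x : Fin d → ℂ | ∀ j, ‖x j‖ < 1} := by
    intro x hx y hy hxy
    ext j
    have := congrFun hxy j
    simp only at this
    rw [← hinv j _ (hx j), this, hinv j _ (hy j)]
  have him : (fun (z : Fin d → ℂ) j => tauM (P j) (c j) (z j)) '' 
      {x : Fin d → ℂ | ∀ j, ‖x j‖ < 1} = {x : Fin d → ℂ | ∀ j, ‖x j‖ < 1} := by
    ext w
    constructor
    · rintro ⟨z, hz, rfl⟩ j
      exact tau_lt (hP j) (hc j) (hz j)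
    · intro hw
      have hl : ∀ j, ‖(c j)⁻¹ * conj (w j)‖ < 1 := by
        intro j
        simpa [hc] using hw j
      refine ⟨fun j => phiM (P j) ((c j)⁻¹ * conj (w j)), fun j => phi_lt (hP j) (hl j), ?_⟩
      ext j
      have : c j ≠ 0 := by rw [← norm_ne_zero_iff, hc]; simp
      simp only [tauM]
      rw [phi_phi (hP j) (hl j), mul_inv_cancel_left₀ this, Complex.conj_conj]
  have hd : ∀ z ∈ {x : Fin d → ℂ | ∀ j, ‖x j‖ < 1},
      HasFDerivWithinAt (fun (z : Fin d → ℂ) j => tauM (P j) (c j) (z j))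
        (ContinuousLinearMap.pi fun j => (dtauM (P j) (c j) (z j)).comp
          (ContinuousLinearMap.proj j)) {x : Fin d → ℂ | ∀ j, ‖x j‖ < 1} z := by
    intro z hz
    apply HasFDerivAt.hasFDerivWithinAt
    rw [hasFDerivAt_pi]
    exact fun j => HasFDerivAt.comp (g := tauM (P j) (c j)) z (hasFDerivAt_tau (hP j) (hz j)) (hasFDerivAt_apply j z)
  have := lintegral_image_eq_lintegral_abs_det_fderiv_mul (Measure.pi fun _ => dA) hm hd hinj F
  rw [him] at this
  rw [this]
  simp_rw [ContinuousLinearMap.det_pi, Finset.abs_prod, det_dtau (hP _) (hc _)]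

theorem stmt_7 (d : ℕ) (hd : 1 ≤ d) (ℓ : Fin d → ℕ)
    (U₁ U₂ : Finset (Fin d)) (hU : U₁ ∪ U₂ = Finset.univ) (hUdisj : U₁ ∩ U₂ = ∅)
    (p q : Fin d → ℂ)
    (hp : ∀ j ∈ U₁, p j ≠ 0 ∧ ‖p j‖ < 1)
    (hq : ∀ j ∈ U₂, ‖q j‖ = 1)
    (ω : (Fin d → ℂ) → Fin d → ℂ)
    (hω : ∀ z : Fin d → ℂ, ∀ j : Fin d, ω z j =
      if j ∈ U₁ then (conj (p j) / p j) * ((p j - z j) / (1 - conj (p j) * z j))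
      else q j * z j)
    (ϑ : (Fin d → ℂ) → ℂ)
    (hϑ : ∀ z : Fin d → ℂ, ϑ z =
      ∏ j ∈ U₁, (((1 - ‖p j‖ ^ 2) ^ ((1 : ℝ) + (ℓ j : ℝ) / 2) : ℝ) : ℂ) /
        (1 - conj (p j) * z j) ^ (ℓ j + 2)) :
    ∀ h : (Fin d → ℂ) → ℂ,
      AnalyticOnNhd ℂ h {z : Fin d → ℂ | ∀ j, ‖z j‖ < 1} →
      (∫⁻ z in {z : Fin d → ℂ | ∀ j, ‖z j‖ < 1},
          ENNReal.ofReal (‖ϑ z‖ ^ 2 * ‖h (fun i => conj (ω z i))‖ ^ 2 *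
            ∏ j, (1 + (ℓ j : ℝ)) * (1 - ‖z j‖ ^ 2) ^ ℓ j)
          ∂(Measure.pi fun _ => dA))
        = ∫⁻ x in {x : Fin d → ℂ | ∀ j, ‖x j‖ < 1},
            ENNReal.ofReal (‖h x‖ ^ 2 * ∏ j, (1 + (ℓ j : ℝ)) * (1 - ‖x j‖ ^ 2) ^ ℓ j)
            ∂(Measure.pi fun _ => dA) := by
  intro h _
  set P : Fin d → ℂ := fun j => if j ∈ U₁ then p j else 0 with hPdef
  set c : Fin d → ℂ := fun j => if j ∈ U₁ then conj (p j) / p j else - q j with hcdef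
  have hU2 : ∀ j, j ∉ U₁ → j ∈ U₂ := by
    intro j hj
    have : j ∈ U₁ ∪ U₂ := by rw [hU]; simp
    rcases Finset.mem_union.mp this with h | h
    · exact absurd h hj
    · exact h
  have hP : ∀ j, ‖P j‖ < 1 := by
    intro j
    by_cases hj : j ∈ U₁
    · simpa [hPdef, hj] using (hp j hj).2
    · simp [hPdef, hj]
  have hc : ∀ j, ‖c j‖ = 1 := by
    intro j
    by_cases hj : j ∈ U₁
    · have := (hp j hj).1
      simp [hcdef, hj, this]
    · simpa [hcdef, hj] using hq j (hU2 j hj)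
  have hm : MeasurableSet {x : Fin d → ℂ | ∀ j, ‖x j‖ < 1} := by
    rw [Set.ofPred_forall]
    exact MeasurableSet.iInter fun j => measurableSet_lt (by fun_prop) (by fun_prop)
  rw [change_var d P c hP hc (fun x => ENNReal.ofReal
    (‖h x‖ ^ 2 * ∏ j, (1 + (ℓ j : ℝ)) * (1 - ‖x j‖ ^ 2) ^ ℓ j))]
  refine setLIntegral_congr_fun hm fun z hz => ?_
  have hT : (fun i => conj (ω z i)) = fun j => tauM (P j) (c j) (z j) := by
    ext j
    rw [hω]
    by_cases hj : j ∈ U₁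
    · simp [tauM, phiM, hPdef, hcdef, hj]
    · simp [tauM, phiM, hPdef, hcdef, hj]
  have hth : ‖ϑ z‖ ^ 2 = ∏ j, ((1 - ‖P j‖ ^ 2) / ‖1 - conj (P j) * z j‖ ^ 2) ^ (ℓ j + 2) := by
    rw [hϑ, norm_prod, ← Finset.prod_pow]
    rw [← Finset.prod_subset (Finset.subset_univ U₁)]
    · refine Finset.prod_congr rfl fun j hj => ?_
      have hs : 0 < 1 - ‖p j‖ ^ 2 := by nlinarith [norm_nonneg (p j), (hp j hj).2]
      have hPj : P j = p j := by simp [hPdef, hj]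
      rw [hPj, norm_div, div_pow, Complex.norm_real, Real.norm_of_nonneg (by positivity),
        ← Real.rpow_natCast, ← Real.rpow_mul hs.le, norm_pow, div_pow]
      congr 1
      · have e : ((1 : ℝ) + (ℓ j : ℝ) / 2) * ((2 : ℕ) : ℝ) = ((ℓ j + 2 : ℕ) : ℝ) := by
          push_cast
          ring
        rw [e, Real.rpow_natCast]
      · ring
    · intro j _ hj
      simp [hPdef, hj]
  simp only
  rw [hT, ← ENNReal.ofReal_mul (by positivity)]
  congr 1
  rw [hth]
  have : ∀ j, (1 - ‖P j‖ ^ 2) ^ 2 / (‖1 - conj (P j) * z j‖ ^ 2) ^ 2 *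
      ((1 + (ℓ j : ℝ)) * (1 - ‖tauM (P j) (c j) (z j)‖ ^ 2) ^ ℓ j) =
      ((1 - ‖P j‖ ^ 2) / ‖1 - conj (P j) * z j‖ ^ 2) ^ (ℓ j + 2) *
      ((1 + (ℓ j : ℝ)) * (1 - ‖z j‖ ^ 2) ^ ℓ j) := by
    intro j
    rw [one_sub_tau (hP j) (hc j) (hz j), mul_div_right_comm, mul_pow, pow_add, ← div_pow]
    ring
  rw [mul_left_comm, ← Finset.prod_mul_distrib, Finset.prod_congr rfl fun j _ => this j,
    Finset.prod_mul_distrib]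
  rw [mul_comm (∏ j, _ ^ (ℓ j + 2)) (‖h _‖ ^ 2), mul_assoc]
  simp only [Finset.prod_mul_distrib]
end

section
/- Let d ≥ 1, ℓ ∈ ℤ_{≥0}^d, and let {U₁, U₂} be a partition of {1,…,d}. Let p_j ∈ 𝔻 \ {0} for j ∈ U₁ and q_j ∈ 𝕋 for j ∈ U₂, and define ω = (ω₁,…,ω_d) : 𝔻^d → 𝔻^d by ω_j(z) = (conj(p_j)/p_j)·(p_j − z_j)/(1 − conj(p_j)·z_j) if j ∈ U₁ and ω_j(z) = q_j·z_j if j ∈ U₂, and define ϑ(z) = ∏_{j∈U₁} (1 − |p_j|²)^{1+ℓ_j/2}/(1 − conj(p_j)·z_j)^{ℓ_j+2}. Then for all z, u ∈ 𝔻^d, ϑ(u)·conj(K_z(conj(ω(u)))) = ϑ(z)·K_{conj(ω(z))}(u), where K_w(u) = ∏_{j=1}^d (1 − u_j·conj(w_j))^{−(ℓ_j+2)}. -/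
open Complex ComplexConjugate

theorem stmt_8 (d : ℕ) (hd : 1 ≤ d) (ℓ : Fin d → ℕ)
    (U₁ U₂ : Finset (Fin d)) (hU : U₁ ∪ U₂ = Finset.univ) (hUdisj : U₁ ∩ U₂ = ∅)
    (p q : Fin d → ℂ)
    (hp : ∀ j ∈ U₁, p j ≠ 0 ∧ ‖p j‖ < 1)
    (hq : ∀ j ∈ U₂, ‖q j‖ = 1)
    (ω : (Fin d → ℂ) → Fin d → ℂ)
    (hω : ∀ z : Fin d → ℂ, ∀ j : Fin d, ω z j =
      if j ∈ U₁ then (conj (p j) / p j) * ((p j - z j) / (1 - conj (p j) * z j))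
      else q j * z j)
    (ϑ : (Fin d → ℂ) → ℂ)
    (hϑ : ∀ z : Fin d → ℂ, ϑ z =
      ∏ j ∈ U₁, (((1 - ‖p j‖ ^ 2) ^ ((1 : ℝ) + (ℓ j : ℝ) / 2) : ℝ) : ℂ) /
        (1 - conj (p j) * z j) ^ (ℓ j + 2))
    (K : (Fin d → ℂ) → (Fin d → ℂ) → ℂ)
    (hK : ∀ w u : Fin d → ℂ, K w u = ∏ j, ((1 - u j * conj (w j)) ^ (ℓ j + 2))⁻¹) :
    ∀ z ∈ {z : Fin d → ℂ | ∀ j, ‖z j‖ < 1},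
      ∀ u ∈ {u : Fin d → ℂ | ∀ j, ‖u j‖ < 1},
        ϑ u * conj (K z (fun i => conj (ω u i))) = ϑ z * K (fun i => conj (ω z i)) u := by
  intro z hz u hu
  have key : ∀ j ∈ U₁, ∀ x : ℂ, ‖x‖ < 1 → 1 - conj (p j) * x ≠ 0 := by
    intro j hj x hx h
    have h1 : conj (p j) * x = 1 := (sub_eq_zero.mp h).symm
    have h2 : ‖p j‖ * ‖x‖ = 1 := by
      have := congrArg norm h1
      simpa using this
    have := (hp j hj).2
    nlinarith [norm_nonneg (p j), norm_nonneg x]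
  have ht : ∀ x : Fin d → ℂ, ϑ x = ∏ j, if j ∈ U₁ then
      (((1 - ‖p j‖ ^ 2) ^ ((1 : ℝ) + (ℓ j : ℝ) / 2) : ℝ) : ℂ) /
        (1 - conj (p j) * x j) ^ (ℓ j + 2) else 1 := by
    intro x
    rw [hϑ, Finset.prod_ite_mem, Finset.univ_inter]
  rw [ht, ht, hK, hK, map_prod, ← Finset.prod_mul_distrib, ← Finset.prod_mul_distrib]
  refine Finset.prod_congr rfl fun j _ => ?_
  simp only [map_inv₀, map_pow, map_sub, map_one, map_mul, Complex.conj_conj, hω]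
  by_cases hj : j ∈ U₁
  · simp only [hj, if_true]
    have hu' := key j hj (u j) (hu j)
    have hz' := key j hj (z j) (hz j)
    have hp0 := (hp j hj).1
    have aux : ∀ (C a b : ℂ) (n : ℕ), C / a ^ n * (b ^ n)⁻¹ = C * ((a * b) ^ n)⁻¹ := by
      intro C a b n
      rw [div_eq_mul_inv, mul_assoc, ← mul_inv, ← mul_pow]
    rw [aux, aux]
    congr 3
    generalize conj (p j) = c at *
    field_simp
    ring
  · simp only [hj, if_false]
    rw [show q j * u j * z j = u j * (q j * z j) by ring]
end

section
/- Let d ≥ 1 and ℓ ∈ ℤ_{≥0}^d. Let c ∈ ℝ, a = (a₁,…,a_d) ∈ 𝔻^d, and b = (b₁,…,b_d) ∈ ℝ^d satisfy |a_κ·(b_κ − |a_κ|² + 1)| + |b_κ| ≤ 1 − |a_κ|² for every κ, and define f(z) = c·∏_{j=1}^d (1 − z_j·conj(a_j))^{−(ℓ_j+2)} and g = (g₁,…,g_d) with g_κ(z) = a_κ + b_κ·z_κ/(1 − conj(a_κ)·z_κ). Then g maps 𝔻^d into 𝔻^d and there exists a constant R > 0 such that for every analytic function h : 𝔻^d → ℂ,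 ∫_{𝔻^d} |f(z)·h(g(z))|² ∏_{j=1}^d (1+ℓ_j)(1−|z_j|²)^{ℓ_j} dA(z₁)⋯dA(z_d) ≤ R·∫_{𝔻^d} |h(x)|² ∏_{j=1}^d (1+ℓ_j)(1−|x_j|²)^{ℓ_j} dA(x₁)⋯dA(x_d) (as an inequality in [0,∞]). -/
open MeasureTheory Complex ComplexConjugate

lemma aux_den_ge {a z : ℂ} (hz : ‖z‖ < 1) : 1 - ‖a‖ ≤ ‖1 - conj a * z‖ := by
  have h1 := norm_sub_norm_le (1:ℂ) (conj a * z)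
  have h2 : ‖conj a * z‖ ≤ ‖a‖ := by
    rw [norm_mul, RCLike.norm_conj]
    exact mul_le_of_le_one_right (norm_nonneg _) hz.le
  rw [norm_one] at h1
  linarith

lemma aux_den_le {a z : ℂ} (ha : ‖a‖ < 1) (hz : ‖z‖ < 1) : ‖1 - conj a * z‖ ≤ 2 := by
  have h1 := norm_sub_le (1:ℂ) (conj a * z)
  have h2 : ‖conj a * z‖ ≤ ‖a‖ := by
    rw [norm_mul, RCLike.norm_conj]
    exact mul_le_of_le_one_right (norm_nonneg _) hz.le
  rw [norm_one] at h1
  linarith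

lemma aux_den_ne {a z : ℂ} (ha : ‖a‖ < 1) (hz : ‖z‖ < 1) : 1 - conj a * z ≠ 0 := by
  have := aux_den_ge (a := a) hz
  rw [← norm_pos_iff]
  linarith

lemma aux_ident (a z : ℂ) :
    ‖1 - conj a * z‖ ^ 2 - ‖z - a‖ ^ 2 = (1 - ‖a‖ ^ 2) * (1 - ‖z‖ ^ 2) := by
  simp only [← Complex.normSq_eq_norm_sq, Complex.normSq_apply]
  simp
  ring

/-- the one-variable map -/
noncomputable def gm (a : ℂ) (b : ℝ) (z : ℂ) : ℂ := a + (b : ℂ) * z / (1 - conj a * z)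

lemma gm_bound {a z : ℂ} {b : ℝ} (ha : ‖a‖ < 1) (hz : ‖z‖ < 1)
    (hab : ‖a * ((b : ℂ) - (‖a‖ : ℂ) ^ 2 + 1)‖ + |b| ≤ 1 - ‖a‖ ^ 2) :
    |b| / 8 * (1 - ‖z‖ ^ 2) ≤ 1 - ‖gm a b z‖ := by
  have hd := aux_den_ne ha hz
  have hN : 0 < 1 - ‖a‖ ^ 2 := by nlinarith [norm_nonneg a]
  set N : ℝ := 1 - ‖a‖ ^ 2 with hNdef
  have hNC : (N : ℂ) ≠ 0 := by exact_mod_cast hN.ne'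
  have hNc : (N : ℂ) = 1 - a * conj a := by
    rw [hNdef, Complex.mul_conj, Complex.normSq_eq_norm_sq]; push_cast; ring
  set φ : ℂ := (z - a) / (1 - conj a * z) with hφ
  have e : gm a b z = a * ((b : ℂ) - (‖a‖ : ℂ) ^ 2 + 1) / N + b / N * φ := by
    have : (b : ℂ) - (‖a‖ : ℂ) ^ 2 + 1 = b + N := by rw [hNdef]; push_cast; ring
    rw [this, hφ, gm]
    obtain ⟨D, hD⟩ : ∃ D, D = 1 - conj a * z := ⟨_, rfl⟩
    rw [← hD] at hd ⊢
    field_simp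
    rw [hNc, hD]
    ring
  have hn : ‖gm a b z‖ ≤ (N - |b|) / N + |b| / N * ‖φ‖ := by
    rw [e]
    refine (norm_add_le _ _).trans ?_
    rw [norm_div, norm_mul (_ / _), norm_div, Complex.norm_real, Complex.norm_real,
      Real.norm_of_nonneg hN.le, Real.norm_eq_abs]
    gcongr
    linarith
  have h1 : 1 - ‖φ‖ ^ 2 = N * (1 - ‖z‖ ^ 2) / ‖1 - conj a * z‖ ^ 2 := by
    have h0 : ‖1 - conj a * z‖ ≠ 0 := norm_ne_zero_iff.2 hd
    rw [hφ, norm_div, ← aux_ident, sub_div, div_self (pow_ne_zero 2 h0), div_pow]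
  have hz2 : 0 ≤ 1 - ‖z‖ ^ 2 := by nlinarith [norm_nonneg z]
  have h2 : N * (1 - ‖z‖ ^ 2) / 4 ≤ 1 - ‖φ‖ ^ 2 := by
    rw [h1]
    have := norm_pos_iff.2 hd
    gcongr
    nlinarith [aux_den_le ha hz]
  have h3 : N * (1 - ‖z‖ ^ 2) / 8 ≤ 1 - ‖φ‖ := by
    nlinarith [sq_nonneg (1 - ‖φ‖)]
  have h4 : |b| / N * (N * (1 - ‖z‖ ^ 2) / 8) ≤ |b| / N * (1 - ‖φ‖) := by gcongr
  have h5 : |b| / N * (N * (1 - ‖z‖ ^ 2) / 8) = |b| / 8 * (1 - ‖z‖ ^ 2) := by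
    field_simp
  have h6 : (N - |b|) / N = 1 - |b| / N := by field_simp
  rw [h6] at hn
  linarith

lemma gm_lt {a z : ℂ} {b : ℝ} (ha : ‖a‖ < 1) (hz : ‖z‖ < 1)
    (hab : ‖a * ((b : ℂ) - (‖a‖ : ℂ) ^ 2 + 1)‖ + |b| ≤ 1 - ‖a‖ ^ 2) :
    ‖gm a b z‖ < 1 := by
  by_cases hb : b = 0
  · simpa [gm, hb] using ha
  · have := gm_bound ha hz hab
    have hz2 : 0 < 1 - ‖z‖ ^ 2 := by nlinarith [norm_nonneg z]
    have : 0 < |b| / 8 * (1 - ‖z‖ ^ 2) := by positivity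
    linarith

lemma gm_deriv {a z : ℂ} (b : ℝ) (ha : ‖a‖ < 1) (hz : ‖z‖ < 1) :
    HasDerivAt (gm a b) ((b : ℂ) / (1 - conj a * z) ^ 2) z := by
  have hd := aux_den_ne ha hz
  have h1 : HasDerivAt (fun z : ℂ => (b : ℂ) * z) ((b : ℂ) * 1) z := (hasDerivAt_id z).const_mul _
  have h2 : HasDerivAt (fun z : ℂ => 1 - conj a * z) (-(conj a * 1)) z :=
    ((hasDerivAt_id z).const_mul _).const_sub _
  have := (h1.div h2 hd).const_add a
  refine this.congr_deriv ?_
  congr 1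
  ring

lemma gm_inj {a : ℂ} {b : ℝ} (hb : b ≠ 0) (ha : ‖a‖ < 1) :
    Set.InjOn (gm a b) (Metric.ball 0 1) := by
  intro z hz w hw h
  simp only [mem_ball_zero_iff] at hz hw
  have hdz := aux_den_ne ha hz
  have hdw := aux_den_ne ha hw
  have hbC : (b : ℂ) ≠ 0 := by exact_mod_cast hb
  simp only [gm] at h
  have h' := add_left_cancel h
  rw [div_eq_div_iff hdz hdw] at h'
  have : (b : ℂ) * (z - w) = 0 := by
    linear_combination h'
  simpa [hbC, sub_eq_zero] using this

lemma gm_meas (a : ℂ) (b : ℝ) : Measurable (gm a b) := by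
  unfold gm
  fun_prop

lemma det_mul (c : ℂ) : ((ContinuousLinearMap.toSpanSingleton ℂ c).restrictScalars ℝ).det
    = ‖c‖ ^ 2 := by
  simp [ContinuousLinearMap.det, LinearMap.det_restrictScalars, Algebra.norm_complex_apply, Complex.normSq_eq_norm_sq]

lemma gm_cov {a : ℂ} {b : ℝ} (hb : b ≠ 0) (ha : ‖a‖ < 1) (G : ℂ → ENNReal) :
    ∫⁻ x in gm a b '' Metric.ball 0 1, G x =
    ∫⁻ z in Metric.ball 0 1, ENNReal.ofReal (‖(b : ℂ) / (1 - conj a * z) ^ 2‖ ^ 2) * G (gm a b z) := by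
  rw [lintegral_image_eq_lintegral_abs_det_fderiv_mul volume measurableSet_ball
    (f' := fun z => (ContinuousLinearMap.toSpanSingleton ℂ
      ((b : ℂ) / (1 - conj a * z) ^ 2)).restrictScalars ℝ) _ (gm_inj hb ha)]
  · simp_rw [det_mul, abs_of_nonneg (sq_nonneg ‖_‖)]
  · intro z hz
    simp only [mem_ball_zero_iff] at hz
    exact ((gm_deriv b ha hz).hasFDerivAt.restrictScalars ℝ).hasFDerivWithinAt
lemma circ_le {u : ℂ → ℂ} {a : ℂ} {r : ℝ} (hr : 0 < r)
    (hu : DifferentiableOn ℂ u (Metric.closedBall a r)) :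
    ‖u a‖ₑ ^ 2 * ENNReal.ofReal (2 * Real.pi) ≤
      ∫⁻ θ in Set.Ioo (-Real.pi) Real.pi, ‖u (a + r * (Real.cos θ + Real.sin θ * I))‖ₑ ^ 2 := by
  have hd : DiffContOnCl ℂ (fun z => u z ^ 2) (Metric.ball a |r|) := by
    rw [abs_of_pos hr]
    have : DifferentiableOn ℂ (fun z => u z ^ 2) (closure (Metric.ball a r)) := by
      rw [closure_ball _ hr.ne']
      exact hu.pow 2
    exact this.diffContOnCl
  have h1 := hd.circleAverage
  rw [Real.circleAverage_eq_integral_add (-Real.pi)] at h1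
  have h2 : ∀ θ : ℝ, circleMap a r (θ + -Real.pi) =
      a + r * (Real.cos (θ + -Real.pi) + Real.sin (θ + -Real.pi) * I) := by
    intro θ
    rw [circleMap, Complex.exp_mul_I]
    push_cast
    rfl
  simp_rw [h2] at h1
  rw [intervalIntegral.integral_comp_add_right
    (fun θ : ℝ => u (a + r * (Real.cos θ + Real.sin θ * I)) ^ 2)] at h1
  have h3 : (∫ θ in (0 + -Real.pi)..(2 * Real.pi + -Real.pi),
      u (a + r * (Real.cos θ + Real.sin θ * I)) ^ 2) = (2 * Real.pi) • u a ^ 2 := by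
    rw [← h1, smul_smul, mul_inv_cancel₀ (by positivity), one_smul]
  rw [intervalIntegral.integral_of_le (by linarith [Real.pi_pos]),
    show 0 + -Real.pi = -Real.pi by ring, show 2 * Real.pi + -Real.pi = Real.pi by ring] at h3
  have h4 := enorm_integral_le_lintegral_enorm (μ := volume.restrict (Set.Ioc (-Real.pi) Real.pi))
    (fun θ : ℝ => u (a + r * (Real.cos θ + Real.sin θ * I)) ^ 2)
  rw [h3, enorm_smul, enorm_pow, Real.enorm_of_nonneg (by positivity), mul_comm] at h4
  refine h4.trans (le_of_eq ?_)
  rw [restrict_Ioo_eq_restrict_Ioc]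
  simp_rw [enorm_pow]

lemma submean {u : ℂ → ℂ} {a : ℂ} {ρ : ℝ} (hρ : 0 < ρ)
    (hu : DifferentiableOn ℂ u (Metric.ball a ρ)) :
    ENNReal.ofReal (ρ / 2) * (‖u a‖ₑ ^ 2 * ENNReal.ofReal (2 * Real.pi)) * ENNReal.ofReal (ρ / 2)
      ≤ ∫⁻ x in Metric.ball a ρ, ‖u x‖ₑ ^ 2 := by
  have e1 : ∫⁻ x in Metric.ball a ρ, ‖u x‖ₑ ^ 2 =
      ∫⁻ x, (Metric.ball (0:ℂ) ρ).indicator (fun x => ‖u (a + x)‖ₑ ^ 2) x := by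
    rw [← lintegral_indicator measurableSet_ball, ← lintegral_add_left_eq_self _ a]
    congr 1
    ext x
    simp [Set.indicator]
  set S : Set (ℝ × ℝ) := Set.Ioo (ρ / 2) ρ ×ˢ Set.Ioo (-Real.pi) Real.pi with hS
  have hSm : MeasurableSet S := measurableSet_Ioo.prod measurableSet_Ioo
  have hST : S ⊆ polarCoord.target := by
    rintro ⟨r, θ⟩ ⟨h1, h2⟩
    refine ⟨?_, h2⟩
    simp only [Set.mem_Ioo, Set.mem_Ioi] at h1 ⊢
    linarith
  have hmem : ∀ p ∈ S, p.1 * ((Real.cos p.2 : ℂ) + Real.sin p.2 * I) ∈ Metric.ball (0:ℂ) ρ := by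
    rintro p ⟨h1, h2⟩
    rw [← Complex.polarCoord_symm_apply, mem_ball_zero_iff, Complex.norm_polarCoord_symm]
    rw [abs_of_pos (by linarith [h1.1])]
    exact h1.2
  rw [e1, ← Complex.lintegral_comp_polarCoord_symm]
  refine le_trans ?_ (lintegral_mono_set hST)
  have e2 : ∫⁻ p in S, ENNReal.ofReal p.1 •
      (Metric.ball (0:ℂ) ρ).indicator (fun x => ‖u (a + x)‖ₑ ^ 2) (Complex.polarCoord.symm p) =
      ∫⁻ p in S, ENNReal.ofReal p.1 * ‖u (a + p.1 * (Real.cos p.2 + Real.sin p.2 * I))‖ₑ ^ 2 := by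
    refine setLIntegral_congr_fun hSm fun p hp => ?_
    simp only [Complex.polarCoord_symm_apply]
    rw [Set.indicator_of_mem (hmem p hp), smul_eq_mul]
  rw [e2, hS, Measure.volume_eq_prod, ← Measure.prod_restrict, lintegral_prod]
  · have : ENNReal.ofReal (ρ / 2) * (‖u a‖ₑ ^ 2 * ENNReal.ofReal (2 * Real.pi)) *
        ENNReal.ofReal (ρ / 2) = ∫⁻ r in Set.Ioo (ρ / 2) ρ,
          ENNReal.ofReal (ρ / 2) * (‖u a‖ₑ ^ 2 * ENNReal.ofReal (2 * Real.pi)) := by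
      rw [setLIntegral_const, Real.volume_Ioo]
      congr 2
      ring
    rw [this]
    refine setLIntegral_mono' measurableSet_Ioo fun r hr => ?_
    have hr0 : 0 < r := by linarith [hr.1]
    rw [lintegral_const_mul' _ _ ENNReal.ofReal_ne_top]
    gcongr
    · exact hr.1.le
    · exact circ_le hr0 (hu.mono (Metric.closedBall_subset_ball hr.2))
  · rw [Measure.prod_restrict, ← Measure.volume_eq_prod]
    have hc : ContinuousOn (fun p : ℝ × ℝ => u (a + p.1 * (Real.cos p.2 + Real.sin p.2 * I))) S := by
      refine hu.continuousOn.comp (by fun_prop) fun p hp => ?_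
      have := hmem p hp
      rw [mem_ball_zero_iff] at this
      simpa using this
    have := hc.aemeasurable (μ := volume) hSm
    exact (ENNReal.measurable_ofReal.comp measurable_fst).aemeasurable.mul (this.enorm.pow_const 2)

/-- weight -/
noncomputable def wt (l : ℕ) (z : ℂ) : ℝ := (1 + (l : ℝ)) * (1 - ‖z‖ ^ 2) ^ l

/-- weight with the multiplier -/
noncomputable def kt (a : ℂ) (l : ℕ) (z : ℂ) : ℝ :=
  ‖((1 - z * conj a) ^ (l + 2))⁻¹‖ ^ 2 * wt l z

lemma wt_nonneg {l : ℕ} {z : ℂ} (hz : ‖z‖ < 1) : 0 ≤ wt l z := by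
  have hz2 : 0 ≤ 1 - ‖z‖ ^ 2 := by nlinarith [norm_nonneg z]
  unfold wt; positivity

lemma kt_le {a z : ℂ} {l : ℕ} (ha : ‖a‖ < 1) (hz : ‖z‖ < 1) :
    kt a l z ≤ (((1 - ‖a‖) ^ (l + 2))⁻¹) ^ 2 * wt l z := by
  unfold kt
  have h := aux_den_ge (a := a) hz
  have h0 : 0 < 1 - ‖a‖ := by linarith
  have := wt_nonneg (l := l) hz
  rw [norm_inv, norm_pow, mul_comm z]
  gcongr

lemma onevar {a : ℂ} {b : ℝ} (l : ℕ) (ha : ‖a‖ < 1)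
    (hab : ‖a * ((b : ℂ) - (‖a‖ : ℂ) ^ 2 + 1)‖ + |b| ≤ 1 - ‖a‖ ^ 2) :
    ∃ R : ENNReal, R ≠ ⊤ ∧ ∀ u : ℂ → ℂ, DifferentiableOn ℂ u (Metric.ball 0 1) →
      ∫⁻ z in Metric.ball 0 1, ‖u (gm a b z)‖ₑ ^ 2 * ENNReal.ofReal (kt a l z) ≤
      R * ∫⁻ x in Metric.ball 0 1, ‖u x‖ₑ ^ 2 * ENNReal.ofReal (wt l x) := by
  set M : ℝ := (((1 - ‖a‖) ^ (l + 2))⁻¹) ^ 2 with hM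
  have hM0 : 0 ≤ M := by positivity
  by_cases hb : b = 0
  · set ρ : ℝ := (1 - ‖a‖) / 2 with hρ
    have hρ0 : 0 < ρ := by rw [hρ]; linarith
    have hsub : Metric.ball a ρ ⊆ Metric.ball 0 1 := by
      apply Metric.ball_subset_ball'
      rw [dist_zero_right]; linarith
    set c : ENNReal := ENNReal.ofReal (ρ / 2) * ENNReal.ofReal (2 * Real.pi) *
      ENNReal.ofReal (ρ / 2) * ENNReal.ofReal (ρ ^ l) with hc
    have hc0 : c ≠ 0 := by
      have := Real.pi_pos
      simp only [hc, ne_eq, mul_eq_zero, ENNReal.ofReal_eq_zero, not_or, not_le]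
      refine ⟨⟨⟨?_, ?_⟩, ?_⟩, ?_⟩ <;> positivity
    have hct : c ≠ ⊤ := by
      simp only [hc]
      finiteness
    set Q : ENNReal := ENNReal.ofReal (M * (1 + l)) * volume (Metric.ball (0:ℂ) 1) with hQ
    have hQt : Q ≠ ⊤ := ENNReal.mul_ne_top ENNReal.ofReal_ne_top measure_ball_lt_top.ne
    refine ⟨Q * c⁻¹, ENNReal.mul_ne_top hQt (ENNReal.inv_ne_top.2 hc0), fun u hu => ?_⟩
    have h1 : ∫⁻ z in Metric.ball 0 1, ‖u (gm a b z)‖ₑ ^ 2 * ENNReal.ofReal (kt a l z) ≤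
        ‖u a‖ₑ ^ 2 * Q := by
      have : ‖u a‖ₑ ^ 2 * Q = ∫⁻ z in Metric.ball (0:ℂ) 1,
          ‖u a‖ₑ ^ 2 * ENNReal.ofReal (M * (1 + l)) := by
        rw [setLIntegral_const, hQ, mul_assoc]
      rw [this]
      refine setLIntegral_mono' measurableSet_ball fun z hz => ?_
      rw [mem_ball_zero_iff] at hz
      have e : gm a b z = a := by simp [gm, hb]
      rw [e]
      gcongr
      refine (kt_le ha hz).trans ?_
      gcongr
      unfold wt
      have hz2 : 0 ≤ 1 - ‖z‖ ^ 2 := by nlinarith [norm_nonneg z]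
      have : (1 - ‖z‖ ^ 2) ^ l ≤ 1 := pow_le_one₀ hz2 (by nlinarith [norm_nonneg z])
      have hl : (0:ℝ) ≤ 1 + l := by positivity
      nlinarith
    have h2 : ‖u a‖ₑ ^ 2 * c ≤ ∫⁻ x in Metric.ball 0 1, ‖u x‖ₑ ^ 2 * ENNReal.ofReal (wt l x) := by
      calc ‖u a‖ₑ ^ 2 * c = ENNReal.ofReal (ρ / 2) * (‖u a‖ₑ ^ 2 * ENNReal.ofReal (2 * Real.pi)) *
            ENNReal.ofReal (ρ / 2) * ENNReal.ofReal (ρ ^ l) := by rw [hc]; ring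
        _ ≤ (∫⁻ x in Metric.ball a ρ, ‖u x‖ₑ ^ 2) * ENNReal.ofReal (ρ ^ l) := by
            gcongr
            exact submean hρ0 (hu.mono hsub)
        _ = ∫⁻ x in Metric.ball a ρ, ‖u x‖ₑ ^ 2 * ENNReal.ofReal (ρ ^ l) := by
            rw [lintegral_mul_const' _ _ ENNReal.ofReal_ne_top]
        _ ≤ ∫⁻ x in Metric.ball a ρ, ‖u x‖ₑ ^ 2 * ENNReal.ofReal (wt l x) := by
            refine setLIntegral_mono' measurableSet_ball fun z hz => ?_
            gcongr
            have hz1 : ‖z‖ < ‖a‖ + ρ := by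
              rw [Metric.mem_ball, dist_eq_norm] at hz
              have := norm_sub_norm_le z a
              linarith
            have hz3 : ρ ≤ 1 - ‖z‖ := by linarith
            have hz2 : ρ ≤ 1 - ‖z‖ ^ 2 := by nlinarith [norm_nonneg z]
            have h5 : ρ ^ l ≤ (1 - ‖z‖ ^ 2) ^ l := by gcongr
            have h6 : 0 ≤ ρ ^ l := by positivity
            unfold wt
            have hl : (0:ℝ) ≤ l := by positivity
            nlinarith
        _ ≤ _ := lintegral_mono_set hsub
    calc _ ≤ ‖u a‖ₑ ^ 2 * Q := h1
      _ = Q * c⁻¹ * (‖u a‖ₑ ^ 2 * c) := by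
          rw [show Q * c⁻¹ * (‖u a‖ₑ ^ 2 * c) = ‖u a‖ₑ ^ 2 * Q * (c⁻¹ * c) by ring,
            ENNReal.inv_mul_cancel hc0 hct, mul_one]
      _ ≤ _ := by gcongr
  · set R : ℝ := M * (8 / |b|) ^ l * (16 / b ^ 2) with hR
    refine ⟨ENNReal.ofReal R, ENNReal.ofReal_ne_top, fun u hu => ?_⟩
    have hR0 : 0 ≤ R := by positivity
    have hb0 : 0 < |b| := abs_pos.2 hb
    have hsub : gm a b '' Metric.ball 0 1 ⊆ Metric.ball 0 1 := by
      rintro _ ⟨z, hz, rfl⟩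
      rw [mem_ball_zero_iff] at hz ⊢
      exact gm_lt ha hz hab
    refine le_trans ?_ (mul_le_mul_right (lintegral_mono_set hsub) _)
    rw [gm_cov hb ha, ← lintegral_const_mul' _ _ ENNReal.ofReal_ne_top]
    refine setLIntegral_mono' measurableSet_ball fun z hz => ?_
    rw [mem_ball_zero_iff] at hz
    have hgz := gm_lt ha hz hab
    have key : kt a l z ≤ R * (‖(b : ℂ) / (1 - conj a * z) ^ 2‖ ^ 2 * wt l (gm a b z)) := by
      have k1 := kt_le (l := l) ha hz
      have k2 := gm_bound ha hz hab
      have hz2 : 0 ≤ 1 - ‖z‖ ^ 2 := by nlinarith [norm_nonneg z]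
      have k3 : 1 - ‖z‖ ^ 2 ≤ 8 / |b| * (1 - ‖gm a b z‖ ^ 2) := by
        have : |b| / 8 * (1 - ‖z‖ ^ 2) ≤ 1 - ‖gm a b z‖ ^ 2 := by
          nlinarith [norm_nonneg (gm a b z)]
        calc 1 - ‖z‖ ^ 2 = 8 / |b| * (|b| / 8 * (1 - ‖z‖ ^ 2)) := by field_simp
          _ ≤ _ := by gcongr
      have k4 : wt l z ≤ (8 / |b|) ^ l * wt l (gm a b z) := by
        unfold wt
        calc (1 + (l:ℝ)) * (1 - ‖z‖ ^ 2) ^ l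
            ≤ (1 + (l:ℝ)) * (8 / |b| * (1 - ‖gm a b z‖ ^ 2)) ^ l := by gcongr
          _ = _ := by rw [mul_pow]; ring
      have k5 : 1 ≤ 16 / b ^ 2 * ‖(b : ℂ) / (1 - conj a * z) ^ 2‖ ^ 2 := by
        rw [norm_div, norm_pow, Complex.norm_real, Real.norm_eq_abs, div_pow, sq_abs]
        have hD := norm_pos_iff.2 (aux_den_ne ha hz)
        have hD2 := aux_den_le ha hz
        have : (‖1 - conj a * z‖ ^ 2) ^ 2 ≤ 16 := by
          calc (‖1 - conj a * z‖ ^ 2) ^ 2 ≤ (2 ^ 2) ^ 2 := by gcongr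
            _ = 16 := by norm_num
        rw [div_mul_div_comm, one_le_div (by positivity)]
        nlinarith [sq_nonneg b]
      have k6 : 0 ≤ M * ((8 / |b|) ^ l * wt l (gm a b z)) := by
        have := wt_nonneg (l := l) hgz
        positivity
      calc kt a l z ≤ M * wt l z := k1
        _ ≤ M * ((8 / |b|) ^ l * wt l (gm a b z)) := by gcongr
        _ ≤ M * ((8 / |b|) ^ l * wt l (gm a b z)) *
            (16 / b ^ 2 * ‖(b : ℂ) / (1 - conj a * z) ^ 2‖ ^ 2) := le_mul_of_one_le_right k6 k5
        _ = _ := by rw [hR]; ring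
    calc ‖u (gm a b z)‖ₑ ^ 2 * ENNReal.ofReal (kt a l z)
        ≤ ‖u (gm a b z)‖ₑ ^ 2 * ENNReal.ofReal
          (R * (‖(b : ℂ) / (1 - conj a * z) ^ 2‖ ^ 2 * wt l (gm a b z))) := by gcongr
      _ = _ := by
          rw [ENNReal.ofReal_mul hR0, ENNReal.ofReal_mul (sq_nonneg _)]
          ring
/-- the polydisk -/
def PD (d : ℕ) : Set (Fin d → ℂ) := {z | ∀ j, ‖z j‖ < 1}

lemma PD_open (d : ℕ) : IsOpen (PD d) := by
  have : PD d = ⋂ j, {z : Fin d → ℂ | ‖z j‖ < 1} := by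
    ext z; simp [PD]
  rw [this]
  exact isOpen_iInter_of_finite fun j => isOpen_lt (by fun_prop) continuous_const

/-- squared modulus cut off outside the polydisk -/
noncomputable def HH {d : ℕ} (h : (Fin d → ℂ) → ℂ) : (Fin d → ℂ) → ENNReal :=
  (PD d).indicator fun z => ‖h z‖ₑ ^ 2

lemma indic_meas {X : Type*} [TopologicalSpace X] [MeasurableSpace X] [BorelSpace X]
    {s : Set X} (hs : IsOpen s) {h : X → ℂ} (hh : ContinuousOn h s) :
    Measurable (s.indicator fun z => ‖h z‖ₑ ^ 2) := by
  classical
  have h2 : ContinuousOn (fun z => ‖h z‖ₑ ^ 2) s := by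
    have := hh.enorm
    exact (ENNReal.continuous_pow 2).comp_continuousOn this
  have h3 := h2.measurable_piecewise (g := fun _ => 0) continuousOn_const hs.measurableSet
  rw [← Set.piecewise_eq_indicator]
  exact h3

lemma cons_meas (d : ℕ) :
    Measurable fun p : ℂ × (Fin d → ℂ) => (Fin.cons p.1 p.2 : Fin (d + 1) → ℂ) := by
  rw [measurable_pi_iff]
  intro i
  refine Fin.cases ?_ (fun j => ?_) i
  · simpa using measurable_fst
  · simp only [Fin.cons_succ]; fun_prop

lemma lint_succ (σ : Measure ℂ) [SigmaFinite σ] (d : ℕ) (F : (Fin (d + 1) → ℂ) → ENNReal)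
    (hF : Measurable F) :
    ∫⁻ z, F z ∂(Measure.pi fun _ => σ) =
      ∫⁻ x, ∫⁻ y, F (Fin.cons x y) ∂(Measure.pi fun _ => σ) ∂σ := by
  have h := (measurePreserving_piFinSuccAbove (fun _ : Fin (d + 1) => σ) 0).symm
  rw [← h.lintegral_comp hF, lintegral_prod]
  · refine lintegral_congr fun x => lintegral_congr fun y => ?_
    simp [MeasurableEquiv.piFinSuccAbove_symm_apply, Fin.insertNthEquiv]
  · exact (hF.comp (MeasurableEquiv.measurable _)).aemeasurable

lemma HH_cons {d : ℕ} (h : (Fin (d + 1) → ℂ) → ℂ) (x : ℂ) (y : Fin d → ℂ) :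
    HH h (Fin.cons x y) = (Metric.ball 0 1).indicator
      (fun _ => HH (fun y => h (Fin.cons x y)) y) x := by
  by_cases hx : ‖x‖ < 1 <;> by_cases hy : ∀ j, ‖y j‖ < 1 <;>
    simp [HH, PD, Set.indicator, Fin.forall_fin_succ, hx, hy]

lemma HH_cons' {d : ℕ} (h : (Fin (d + 1) → ℂ) → ℂ) (x : ℂ) (y : Fin d → ℂ) :
    HH h (Fin.cons x y) = (PD d).indicator
      (fun _ => (Metric.ball 0 1).indicator (fun x => ‖h (Fin.cons x y)‖ₑ ^ 2) x) y := by
  by_cases hx : ‖x‖ < 1 <;> by_cases hy : ∀ j, ‖y j‖ < 1 <;>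
    simp [HH, PD, Set.indicator, Fin.forall_fin_succ, hx, hy]

lemma multi (σ : Measure ℂ) [SigmaFinite σ] : ∀ (d : ℕ) (g : Fin d → ℂ → ℂ)
    (K W : Fin d → ℂ → ENNReal) (R : Fin d → ENNReal)
    (_ : ∀ j, Measurable (g j)) (_ : ∀ j, Measurable (K j)) (_ : ∀ j, Measurable (W j))
    (_ : ∀ j, ∀ u : ℂ → ℂ, DifferentiableOn ℂ u (Metric.ball 0 1) →
      ∫⁻ z, (Metric.ball 0 1).indicator (fun x => ‖u x‖ₑ ^ 2) (g j z) * K j z ∂σ ≤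
      R j * ∫⁻ x, (Metric.ball 0 1).indicator (fun x => ‖u x‖ₑ ^ 2) x * W j x ∂σ)
    (h : (Fin d → ℂ) → ℂ) (_ : DifferentiableOn ℂ h (PD d)),
    ∫⁻ z, HH h (fun j => g j (z j)) * ∏ j, K j (z j) ∂(Measure.pi fun _ => σ) ≤
      (∏ j, R j) * ∫⁻ x, HH h x * ∏ j, W j (x j) ∂(Measure.pi fun _ => σ) := by
  intro d
  induction d with
  | zero =>
    intro g K W R _ _ _ _ h _
    simp only [Finset.univ_eq_empty, Finset.prod_empty, mul_one, one_mul]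
    exact lintegral_mono fun z => by rw [Subsingleton.elim (fun j => g j (z j)) z]
  | succ d ih =>
    intro g K W R hg hK hW hR h hh
    have hHm : Measurable (HH h) := indic_meas (PD_open _) hh.continuousOn
    have hHc : Measurable fun p : ℂ × (Fin d → ℂ) => HH h (Fin.cons p.1 p.2) :=
      hHm.comp (cons_meas d)
    have hc2 : Measurable fun z : Fin (d + 1) → ℂ => (fun j => g j (z j)) := by
      rw [measurable_pi_iff]; intro j; exact (hg j).comp (measurable_pi_apply j)
    have hc3 : Measurable fun z : Fin d → ℂ => (fun j : Fin d => g j.succ (z j)) := by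
      rw [measurable_pi_iff]; intro j; exact (hg j.succ).comp (measurable_pi_apply j)
    have hKp : Measurable fun z : Fin (d + 1) → ℂ => ∏ j, K j (z j) :=
      Finset.measurable_fun_prod _ fun j _ => (hK j).comp (measurable_pi_apply j)
    have hWp : Measurable fun z : Fin (d + 1) → ℂ => ∏ j, W j (z j) :=
      Finset.measurable_fun_prod _ fun j _ => (hW j).comp (measurable_pi_apply j)
    have hKp' : Measurable fun z : Fin d → ℂ => ∏ j : Fin d, K j.succ (z j) :=
      Finset.measurable_fun_prod _ fun j _ => (hK j.succ).comp (measurable_pi_apply j)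
    have hWp' : Measurable fun z : Fin d → ℂ => ∏ j : Fin d, W j.succ (z j) :=
      Finset.measurable_fun_prod _ fun j _ => (hW j.succ).comp (measurable_pi_apply j)
    have hK0 := hK 0
    have hW0 := hW 0
    have hg0 := hg 0
    have hGc : Measurable fun p : ℂ × (Fin d → ℂ) => HH h (Fin.cons (g 0 p.1) p.2) :=
      hHc.comp ((hg0.comp measurable_fst).prodMk measurable_snd)
    rw [lint_succ σ d (fun z => HH h (fun j => g j (z j)) * ∏ j, K j (z j))
      ((hHm.comp hc2).mul hKp),
      lint_succ σ d (fun z => HH h z * ∏ j, W j (z j)) (hHm.mul hWp)]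
    have econs : ∀ (x : ℂ) (y : Fin d → ℂ),
        (fun j => g j ((Fin.cons x y : Fin (d + 1) → ℂ) j)) =
          (Fin.cons (g 0 x) (fun j => g j.succ (y j)) : Fin (d + 1) → ℂ) := by
      intro x y
      ext j
      refine Fin.cases ?_ (fun j => ?_) j <;> simp
    simp only [econs, Fin.prod_univ_succ, Fin.cons_zero, Fin.cons_succ]
    set π' : Measure (Fin d → ℂ) := Measure.pi fun _ => σ with hπ
    set R' : ENNReal := ∏ j : Fin d, R j.succ with hR'
    have dx : ∀ x : ℂ, ‖x‖ < 1 → DifferentiableOn ℂ (fun y : Fin d → ℂ => h (Fin.cons x y)) (PD d) := by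
      intro x hx
      refine hh.comp (t := PD (d + 1)) ?_ ?_
      · refine Differentiable.differentiableOn ?_
        rw [differentiable_pi]
        intro i
        refine Fin.cases ?_ (fun j => ?_) i
        · simp
        · simp only [Fin.cons_succ]; fun_prop
      · intro y hy
        simp only [PD, Set.mem_ofPred_eq] at hy ⊢
        simpa [Fin.forall_fin_succ, hx] using hy
    have dy : ∀ y ∈ PD d, DifferentiableOn ℂ (fun x : ℂ => h (Fin.cons x y)) (Metric.ball 0 1) := by
      intro y hy
      refine hh.comp (t := PD (d + 1)) ?_ ?_
      · refine Differentiable.differentiableOn ?_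
        rw [differentiable_pi]
        intro i
        refine Fin.cases ?_ (fun j => ?_) i
        · simp
        · simp
      · intro x hx
        simp only [PD, Set.mem_ofPred_eq, mem_ball_zero_iff] at hx hy ⊢
        simpa [Fin.forall_fin_succ, hx] using hy
    calc _ = ∫⁻ x, K 0 x * ∫⁻ y, HH h (Fin.cons (g 0 x) fun j => g j.succ (y j)) *
              ∏ j : Fin d, K j.succ (y j) ∂π' ∂σ := by
          refine lintegral_congr fun x => ?_
          rw [← lintegral_const_mul]
          · refine lintegral_congr fun y => ?_
            ring
          · refine Measurable.mul ?_ hKp'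
            exact hGc.comp (measurable_prodMk_left.comp hc3)
      _ ≤ ∫⁻ x, K 0 x * (R' * ∫⁻ y, HH h (Fin.cons (g 0 x) y) *
              ∏ j : Fin d, W j.succ (y j) ∂π') ∂σ := by
          refine lintegral_mono fun x => ?_
          dsimp only
          gcongr
          by_cases hx : ‖g 0 x‖ < 1
          · have := ih (fun j => g j.succ) (fun j => K j.succ) (fun j => W j.succ)
              (fun j => R j.succ) (fun j => hg _) (fun j => hK _) (fun j => hW _) (fun j => hR _)
              _ (dx _ hx)
            simpa [HH_cons, hx, Set.indicator] using this
          · simp [HH_cons, hx, Set.indicator]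
      _ = R' * ∫⁻ x, ∫⁻ y, (∏ j : Fin d, W j.succ (y j)) *
            (HH h (Fin.cons (g 0 x) y) * K 0 x) ∂π' ∂σ := by
          rw [← lintegral_const_mul]
          · refine lintegral_congr fun x => ?_
            rw [mul_left_comm, ← lintegral_const_mul]
            · congr 1
              refine lintegral_congr fun y => ?_
              ring
            · exact (hGc.comp measurable_prodMk_left).mul hWp'
          · exact Measurable.lintegral_prod_right ((hWp'.comp measurable_snd).mul
              (hGc.mul (hK0.comp measurable_fst)))
      _ = R' * ∫⁻ y, (∏ j : Fin d, W j.succ (y j)) * ∫⁻ x,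
            HH h (Fin.cons (g 0 x) y) * K 0 x ∂σ ∂π' := by
          rw [lintegral_lintegral_swap]
          · congr 1
            refine lintegral_congr fun y => ?_
            rw [lintegral_const_mul]
            exact (hGc.comp measurable_prodMk_right).mul hK0
          · exact ((hWp'.comp measurable_snd).mul
              (hGc.mul (hK0.comp measurable_fst))).aemeasurable
      _ ≤ R' * ∫⁻ y, (∏ j : Fin d, W j.succ (y j)) * (R 0 * ∫⁻ x,
            HH h (Fin.cons x y) * W 0 x ∂σ) ∂π' := by
          gcongr with y
          by_cases hy : y ∈ PD d
          · have := hR 0 _ (dy y hy)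
            simp only [HH_cons', Set.indicator_of_mem hy]
            exact this
          · simp [HH_cons', hy]
      _ = R 0 * R' * ∫⁻ y, ∫⁻ x, (∏ j : Fin d, W j.succ (y j)) *
            (HH h (Fin.cons x y) * W 0 x) ∂σ ∂π' := by
          rw [mul_comm (R 0), mul_assoc, ← lintegral_const_mul (R 0)]
          · congr 1
            refine lintegral_congr fun y => ?_
            rw [mul_left_comm, ← lintegral_const_mul]
            exact (hHc.comp measurable_prodMk_right).mul hW0
          · exact Measurable.lintegral_prod_left ((hWp'.comp measurable_snd).mul
              (hHc.mul (hW0.comp measurable_fst)))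
      _ = _ := by
          rw [lintegral_lintegral_swap]
          · congr 1
            refine lintegral_congr fun x => lintegral_congr fun y => ?_
            ring
          · exact ((hWp'.comp measurable_fst).mul
              ((hHc.comp measurable_swap).mul (hW0.comp measurable_snd))).aemeasurable
lemma onevar' {a : ℂ} {b : ℝ} (l : ℕ) (ha : ‖a‖ < 1)
    (hab : ‖a * ((b : ℂ) - (‖a‖ : ℂ) ^ 2 + 1)‖ + |b| ≤ 1 - ‖a‖ ^ 2) :
    ∃ R : ENNReal, R ≠ ⊤ ∧ ∀ u : ℂ → ℂ, DifferentiableOn ℂ u (Metric.ball 0 1) →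
      ∫⁻ z, (Metric.ball 0 1).indicator (fun x => ‖u x‖ₑ ^ 2) (gm a b z) *
        ENNReal.ofReal (kt a l z) ∂(dA.restrict (Metric.ball 0 1)) ≤
      R * ∫⁻ x, (Metric.ball 0 1).indicator (fun x => ‖u x‖ₑ ^ 2) x *
        ENNReal.ofReal (wt l x) ∂(dA.restrict (Metric.ball 0 1)) := by
  obtain ⟨R, hR, H⟩ := onevar l ha hab
  refine ⟨R, hR, fun u hu => ?_⟩
  have h := H u hu
  rw [dA, Measure.restrict_smul, lintegral_smul_measure, lintegral_smul_measure, smul_eq_mul,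
    smul_eq_mul, mul_left_comm]
  gcongr
  refine le_trans (le_of_eq ?_) (h.trans (le_of_eq ?_))
  · refine setLIntegral_congr_fun measurableSet_ball fun z hz => ?_
    rw [mem_ball_zero_iff] at hz
    rw [Set.indicator_of_mem]
    rw [mem_ball_zero_iff]
    exact gm_lt ha hz hab
  · congr 1
    refine setLIntegral_congr_fun measurableSet_ball fun z hz => ?_
    rw [Set.indicator_of_mem hz]

lemma dA_sf_s13 : SigmaFinite dA := by
  have e : dA = (Real.toNNReal Real.pi)⁻¹ • (volume : Measure ℂ) := by
    unfold dA
    rw [ENNReal.ofReal, ← ENNReal.coe_inv (by simp [Real.pi_pos])]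
    rfl
  rw [e]
  infer_instance

lemma PD_restrict (d : ℕ) : (Measure.pi fun _ : Fin d => dA).restrict (PD d) =
    Measure.pi fun _ => dA.restrict (Metric.ball 0 1) := by
  have := dA_sf_s13
  have e : PD d = Set.pi Set.univ fun _ => Metric.ball (0:ℂ) 1 := by
    ext z; simp [PD]
  rw [e, Measure.restrict_pi_pi]

theorem stmt_13 (d : ℕ) (hd : 1 ≤ d) (ℓ : Fin d → ℕ)
    (c : ℝ) (a : Fin d → ℂ) (b : Fin d → ℝ)
    (ha : ∀ κ, ‖a κ‖ < 1)
    (hab : ∀ κ, ‖a κ * ((b κ : ℂ) - (‖a κ‖ : ℂ) ^ 2 + 1)‖ + |b κ| ≤ 1 - ‖a κ‖ ^ 2)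
    (f : (Fin d → ℂ) → ℂ)
    (hf : ∀ z : Fin d → ℂ, f z = (c : ℂ) * ∏ j, ((1 - z j * conj (a j)) ^ (ℓ j + 2))⁻¹)
    (g : (Fin d → ℂ) → Fin d → ℂ)
    (hg : ∀ z : Fin d → ℂ, ∀ κ, g z κ = a κ + (b κ : ℂ) * z κ / (1 - conj (a κ) * z κ)) :
    (∀ z ∈ {z : Fin d → ℂ | ∀ j, ‖z j‖ < 1}, ∀ κ, ‖g z κ‖ < 1) ∧
    ∃ R : ℝ, 0 < R ∧
      ∀ h : (Fin d → ℂ) → ℂ,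
        AnalyticOnNhd ℂ h {z : Fin d → ℂ | ∀ j, ‖z j‖ < 1} →
        (∫⁻ z in {z : Fin d → ℂ | ∀ j, ‖z j‖ < 1},
            ENNReal.ofReal (‖f z * h (g z)‖ ^ 2 *
              ∏ j, (1 + (ℓ j : ℝ)) * (1 - ‖z j‖ ^ 2) ^ ℓ j)
            ∂(Measure.pi fun _ => dA))
          ≤ ENNReal.ofReal R *
            ∫⁻ x in {x : Fin d → ℂ | ∀ j, ‖x j‖ < 1},
              ENNReal.ofReal (‖h x‖ ^ 2 * ∏ j, (1 + (ℓ j : ℝ)) * (1 - ‖x j‖ ^ 2) ^ ℓ j)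
              ∂(Measure.pi fun _ => dA) := by
  have hgg : ∀ z, g z = fun κ => gm (a κ) (b κ) (z κ) := fun z => funext fun κ => hg z κ
  have hmaps : ∀ z ∈ PD d, (fun κ => gm (a κ) (b κ) (z κ)) ∈ PD d :=
    fun z hz κ => gm_lt (ha κ) (hz κ) (hab κ)
  refine ⟨fun z hz κ => by rw [hgg]; exact hmaps z hz κ, ?_⟩
  choose R hRt hR using fun κ => onevar' (ℓ κ) (ha κ) (hab κ)
  set Q : ENNReal := ENNReal.ofReal (c ^ 2) * ∏ j, R j with hQ
  have hQt : Q ≠ ⊤ := ENNReal.mul_ne_top ENNReal.ofReal_ne_top (ENNReal.prod_ne_top fun j _ => hRt j)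
  refine ⟨Q.toReal + 1, by positivity, fun h hh => ?_⟩
  have hQle : Q ≤ ENNReal.ofReal (Q.toReal + 1) :=
    ENNReal.le_ofReal_iff_toReal_le hQt (by positivity) |>.2 (by linarith)
  have := dA_sf_s13
  have hm := multi (dA.restrict (Metric.ball 0 1)) d (fun j => gm (a j) (b j))
    (fun j z => ENNReal.ofReal (kt (a j) (ℓ j) z)) (fun j z => ENNReal.ofReal (wt (ℓ j) z)) R
    (fun j => gm_meas _ _) (fun j => by unfold kt wt; fun_prop) (fun j => by unfold wt; fun_prop)
    hR h hh.differentiableOn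
  rw [← PD_restrict] at hm
  have hPm : MeasurableSet (PD d) := (PD_open d).measurableSet
  change ∫⁻ z in PD d, _ ∂_ ≤ _ * ∫⁻ z in PD d, _ ∂_
  calc _ = ENNReal.ofReal (c ^ 2) * ∫⁻ z in PD d, HH h (fun j => gm (a j) (b j) (z j)) *
          ∏ j, ENNReal.ofReal (kt (a j) (ℓ j) (z j)) ∂(Measure.pi fun _ => dA) := by
        rw [← lintegral_const_mul' _ _ ENNReal.ofReal_ne_top]
        refine setLIntegral_congr_fun hPm fun z hz => ?_
        have hk : ∀ j ∈ Finset.univ, 0 ≤ kt (a j) (ℓ j) (z j) := fun j _ =>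
          mul_nonneg (sq_nonneg _) (wt_nonneg (hz j))
        rw [HH, Set.indicator_of_mem (hmaps z hz), ← ENNReal.ofReal_prod_of_nonneg hk,
          ← ofReal_norm, ← ENNReal.ofReal_pow (norm_nonneg _), ← ENNReal.ofReal_mul (by positivity),
          ← ENNReal.ofReal_mul (by positivity), hgg, hf]
        congr 1
        simp only [kt, Finset.prod_mul_distrib, wt, norm_mul, norm_prod, Complex.norm_real,
          Real.norm_eq_abs, mul_pow, sq_abs, Finset.prod_pow]
        ring
    _ ≤ ENNReal.ofReal (c ^ 2) * ((∏ j, R j) * ∫⁻ x in PD d, HH h x *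
          ∏ j, ENNReal.ofReal (wt (ℓ j) (x j)) ∂(Measure.pi fun _ => dA)) := by gcongr
    _ ≤ ENNReal.ofReal (Q.toReal + 1) * ∫⁻ x in PD d, HH h x *
          ∏ j, ENNReal.ofReal (wt (ℓ j) (x j)) ∂(Measure.pi fun _ => dA) := by
        rw [← mul_assoc]
        gcongr
    _ = _ := by
        congr 1
        refine setLIntegral_congr_fun hPm fun z hz => ?_
        have hk : ∀ j ∈ Finset.univ, 0 ≤ wt (ℓ j) (z j) := fun j _ => wt_nonneg (hz j)
        rw [HH, Set.indicator_of_mem hz, ← ENNReal.ofReal_prod_of_nonneg hk,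
          ← ofReal_norm, ← ENNReal.ofReal_pow (norm_nonneg _), ← ENNReal.ofReal_mul (by positivity)]
        rfl
end

section
/- Let d ≥ 1 and ℓ ∈ ℤ_{≥0}^d. Let f : 𝔻^d → ℂ and g = (g₁,…,g_d) : 𝔻^d → 𝔻^d be analytic with g(0) = 0, and suppose that conj(f(z))·f(u)·K_{g(z)}(g(u)) = K_z(u) for all z, u ∈ 𝔻^d, where K_w(u) = ∏_{j=1}^d (1 − u_j·conj(w_j))^{−(ℓ_j+2)}. Then there exist c ∈ 𝕋, a₁,…,a_d ∈ 𝕋, and a bijection φ : {1,…,d} → {1,…,d} such that f(z) = c for all z ∈ 𝔻^d and g_κ(z) = a_κ·z_{φ(κ)} for every κ ∈ {1,…,d} and all z ∈ 𝔻^d. -/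
open Complex ComplexConjugate

theorem aux_deriv {d : ℕ} (m : Fin d → ℕ) (h : ℂ → Fin d → ℂ) (A : Fin d → ℂ) (b : Fin d → ℂ)
    (h0 : h 0 = 0) (hA : ∀ j, HasDerivAt (fun t => h t j) (A j) 0) :
    HasDerivAt (fun t => ∏ j, (1 - h t j * b j) ^ (m j)) (- ∑ j, (m j : ℂ) * A j * b j) 0 := by
  have h1 : ∀ j ∈ (Finset.univ : Finset (Fin d)), HasDerivAt (fun t => (1 - h t j * b j) ^ (m j))
      (- ((m j : ℂ) * A j * b j)) 0 := by
    intro j _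
    have := (((hA j).mul_const (b j)).const_sub 1).pow (m j)
    refine HasDerivAt.congr_deriv this ?_
    simp [h0]
    ring
  have := HasDerivAt.fun_finsetProd h1
  refine HasDerivAt.congr_deriv this ?_
  simp [h0, Finset.sum_neg_distrib]

theorem aux_mat {d : ℕ} (m : Fin d → ℕ) (hm : ∀ j, 0 < m j) (A : Fin d → Fin d → ℂ)
    (hU : ∀ k l, ∑ j, (m j : ℂ) * conj (A j k) * A j l = if k = l then (m k : ℂ) else 0)
    (hrow : ∀ j, ∑ k, ‖A j k‖ ≤ 1) :
    ∃ (φ : Equiv.Perm (Fin d)), (∀ j, ‖A j (φ j)‖ = 1) ∧ ∀ j k, k ≠ φ j → A j k = 0 := by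
  have hcol : ∀ k, ∑ j, (m j : ℝ) * ‖A j k‖ ^ 2 = m k := by
    intro k
    have := hU k k
    rw [if_pos rfl] at this
    apply_fun ((↑) : ℝ → ℂ) using Complex.ofReal_injective
    push_cast
    rw [← this]
    refine Finset.sum_congr rfl fun j _ => ?_
    rw [mul_assoc, Complex.conj_mul']
  have hle1 : ∀ j k, ‖A j k‖ ≤ 1 := fun j k =>
    (Finset.single_le_sum (f := fun k => ‖A j k‖) (fun _ _ => norm_nonneg _)
      (Finset.mem_univ k)).trans (hrow j)
  have hsq : ∀ j k, ‖A j k‖ ^ 2 ≤ ‖A j k‖ := fun j k => by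
    nlinarith [hle1 j k, norm_nonneg (A j k)]
  have hrs : ∀ j, ∑ k, ‖A j k‖ ^ 2 ≤ 1 := fun j =>
    (Finset.sum_le_sum fun k _ => hsq j k).trans (hrow j)
  have htot : ∑ j, (m j : ℝ) * ∑ k, ‖A j k‖ ^ 2 = ∑ j, (m j : ℝ) := by
    rw [← Finset.sum_congr rfl fun k _ => hcol k, Finset.sum_comm]
    simp_rw [Finset.mul_sum]
  have hmr : ∀ j, (0 : ℝ) < m j := fun j => by exact_mod_cast hm j
  have hrs1 : ∀ j, ∑ k, ‖A j k‖ ^ 2 = 1 := by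
    intro j
    have := (Finset.sum_eq_sum_iff_of_le (s := Finset.univ)
      (f := fun j => (m j : ℝ) * ∑ k, ‖A j k‖ ^ 2) (g := fun j => (m j : ℝ))
      (fun j _ => by nlinarith [hrs j, hmr j])).1 htot j (Finset.mem_univ j)
    have h2 := hmr j
    simpa [h2.ne'] using this
  have hsq1 : ∀ j k, ‖A j k‖ ^ 2 = ‖A j k‖ := by
    intro j k
    refine (Finset.sum_eq_sum_iff_of_le (s := Finset.univ)
      (f := fun k => ‖A j k‖ ^ 2) (g := fun k => ‖A j k‖)
      (fun k _ => hsq j k)).1 ?_ k (Finset.mem_univ k)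
    exact le_antisymm (Finset.sum_le_sum fun k _ => hsq j k) ((hrow j).trans (hrs1 j).ge)
  have h01 : ∀ j k, A j k ≠ 0 → ‖A j k‖ = 1 := by
    intro j k h
    have h3 := norm_pos_iff.2 h
    have := hsq1 j k
    nlinarith
  have hex : ∀ j, ∃ k, A j k ≠ 0 := by
    intro j
    by_contra! h
    have := hrs1 j
    simp [h] at this
  choose φ hφ using hex
  have huniq : ∀ j k, k ≠ φ j → A j k = 0 := by
    intro j k hk
    by_contra h
    have h1 := h01 j k h
    have h2 := h01 j _ (hφ j)
    have h3 := Finset.sum_le_sum_of_subset_of_nonneg (f := fun k => ‖A j k‖)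
      (Finset.subset_univ {k, φ j}) (fun _ _ _ => norm_nonneg _)
    rw [Finset.sum_pair hk] at h3
    linarith [hrow j]
  have hsurj : Function.Surjective φ := by
    intro k
    by_contra! h
    have := hcol k
    rw [Finset.sum_eq_zero (fun j _ => by rw [huniq j k (h j).symm]; simp)] at this
    exact (hmr k).ne this
  refine ⟨Equiv.ofBijective φ (Finite.surjective_iff_bijective.1 hsurj), ?_, ?_⟩
  · intro j
    exact h01 j _ (hφ j)
  · intro j k hk
    exact huniq j k hk

theorem stmt_14 (d : ℕ) (hd : 1 ≤ d) (ℓ : Fin d → ℕ)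
    (f : (Fin d → ℂ) → ℂ) (g : (Fin d → ℂ) → Fin d → ℂ)
    (hf : AnalyticOnNhd ℂ f {z : Fin d → ℂ | ∀ j, ‖z j‖ < 1})
    (hg : AnalyticOnNhd ℂ g {z : Fin d → ℂ | ∀ j, ‖z j‖ < 1})
    (hgmap : ∀ z ∈ {z : Fin d → ℂ | ∀ j, ‖z j‖ < 1}, ∀ κ, ‖g z κ‖ < 1)
    (hg0 : g 0 = 0)
    (K : (Fin d → ℂ) → (Fin d → ℂ) → ℂ)
    (hK : ∀ w u : Fin d → ℂ, K w u = ∏ j, ((1 - u j * conj (w j)) ^ (ℓ j + 2))⁻¹)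
    (heq : ∀ z ∈ {z : Fin d → ℂ | ∀ j, ‖z j‖ < 1},
      ∀ u ∈ {u : Fin d → ℂ | ∀ j, ‖u j‖ < 1},
        conj (f z) * f u * K (g z) (g u) = K z u) :
    ∃ (c : ℂ) (a : Fin d → ℂ) (φ : Equiv.Perm (Fin d)),
      ‖c‖ = 1 ∧ (∀ κ, ‖a κ‖ = 1) ∧
      (∀ z ∈ {z : Fin d → ℂ | ∀ j, ‖z j‖ < 1}, f z = c) ∧
      (∀ z ∈ {z : Fin d → ℂ | ∀ j, ‖z j‖ < 1}, ∀ κ, g z κ = a κ * z (φ κ)) := by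
  set D : Set (Fin d → ℂ) := {z : Fin d → ℂ | ∀ j, ‖z j‖ < 1} with hD
  have h0D : (0 : Fin d → ℂ) ∈ D := by simp [hD]
  have hf1 : ∀ u ∈ D, conj (f 0) * f u = 1 := by
    intro u hu
    have := heq 0 h0D u hu
    simpa [hK, hg0] using this
  have hf0 : conj (f 0) ≠ 0 := left_ne_zero_of_mul_eq_one (hf1 0 h0D)
  have hfc : ∀ u ∈ D, f u = f 0 := fun u hu =>
    mul_left_cancel₀ hf0 ((hf1 u hu).trans (hf1 0 h0D).symm)
  have hc : ‖f 0‖ = 1 := by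
    have := congrArg norm (hf1 0 h0D)
    simp only [norm_mul, RCLike.norm_conj, norm_one] at this
    nlinarith [norm_nonneg (f 0)]
  have hprod : ∀ z ∈ D, ∀ u ∈ D, ∏ j, (1 - g u j * conj (g z j)) ^ (ℓ j + 2)
      = ∏ j, (1 - u j * conj (z j)) ^ (ℓ j + 2) := by
    intro z hz u hu
    have h := heq z hz u hu
    rw [hfc z hz, hfc u hu,
      hf1 0 h0D, one_mul, hK, hK, Finset.prod_inv_distrib, Finset.prod_inv_distrib] at h
    exact inv_injective h
  have hline : ∀ k, HasDerivAt (fun t : ℂ => (Pi.single k t : Fin d → ℂ)) (Pi.single k 1) 0 := by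
    intro k
    rw [hasDerivAt_pi]
    intro j
    by_cases hjk : j = k
    · subst hjk
      simpa using hasDerivAt_id' (0 : ℂ)
    · simpa [hjk] using hasDerivAt_const (0 : ℂ) (0 : ℂ)
  have hsD : ∀ k (t : ℂ), ‖t‖ < 1 → (Pi.single k t : Fin d → ℂ) ∈ D := by
    intro k t ht j
    by_cases hjk : j = k
    · subst hjk; simpa using ht
    · simp [hjk]
  have hev : ∀ᶠ t : ℂ in nhds 0, ‖t‖ < 1 := by
    have := Metric.ball_mem_nhds (0 : ℂ) one_pos
    filter_upwards [this] with t ht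
    simpa using ht
  obtain ⟨A, hA⟩ : ∃ A : Fin d → Fin d → ℂ, ∀ j k,
      HasDerivAt (fun t : ℂ => g (Pi.single k t) j) (A j k) 0 := by
    refine ⟨fun j k => fderiv ℂ g 0 (Pi.single k 1) j, fun j k => ?_⟩
    have h1 : HasFDerivAt g (fderiv ℂ g 0) ((fun t : ℂ => (Pi.single k t : Fin d → ℂ)) 0) := by
      simpa using (hg 0 h0D).differentiableAt.hasFDerivAt
    have := h1.comp_hasDerivAt (0 : ℂ) (hline k)
    exact (hasDerivAt_pi.1 this) j
  have e1 : ∀ k, ∀ u ∈ D, ∑ j, ((ℓ j + 2 : ℕ) : ℂ) * A j k * conj (g u j)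
      = ((ℓ k + 2 : ℕ) : ℂ) * conj (u k) := by
    intro k u hu
    have d1 := aux_deriv (fun j => ℓ j + 2) (fun t => g (Pi.single k t)) (fun j => A j k)
      (fun j => conj (g u j)) (by simp [hg0]) (fun j => hA j k)
    have d2 := aux_deriv (fun j => ℓ j + 2) (fun t => (Pi.single k t : Fin d → ℂ))
      (Pi.single k 1) (fun j => conj (u j)) (by simp) (fun j => hasDerivAt_pi.1 (hline k) j)
    have d3 := d1.unique (d2.congr_of_eventuallyEq (by
      filter_upwards [hev] with t ht
      exact hprod u hu _ (hsD k t ht)))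
    rw [neg_inj] at d3
    rw [d3, Finset.sum_eq_single k]
    · simp
    · intro j _ hj; simp [hj]
    · simp
  have e2 : ∀ k, ∀ u ∈ D, ∑ j, ((ℓ j + 2 : ℕ) : ℂ) * conj (A j k) * g u j
      = ((ℓ k + 2 : ℕ) : ℂ) * u k := by
    intro k u hu
    have := congrArg conj (e1 k u hu)
    simpa only [map_sum, map_mul, Complex.conj_conj, Complex.conj_natCast] using this
  have hU : ∀ k l, ∑ j, ((ℓ j + 2 : ℕ) : ℂ) * conj (A j k) * A j l
      = if k = l then ((ℓ k + 2 : ℕ) : ℂ) else 0 := by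
    intro k l
    have d1 : HasDerivAt (fun t : ℂ => ∑ j, ((ℓ j + 2 : ℕ) : ℂ) * conj (A j k) * g (Pi.single l t) j)
        (∑ j, ((ℓ j + 2 : ℕ) : ℂ) * conj (A j k) * A j l) 0 :=
      HasDerivAt.fun_sum fun j _ => (hA j l).const_mul _
    have d2 := (hasDerivAt_pi.1 (hline l) k).const_mul ((ℓ k + 2 : ℕ) : ℂ)
    rw [d1.unique (d2.congr_of_eventuallyEq (by
      filter_upwards [hev] with t ht
      exact e2 k _ (hsD l t ht)))]
    by_cases hkl : k = l
    · subst hkl; simp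
    · simp [hkl]
  have hlin : ∀ u ∈ D, ∀ j, g u j = ∑ k, A j k * u k := by
    intro u hu
    let B : Matrix (Fin d) (Fin d) ℂ := fun k j => ((ℓ j + 2 : ℕ) : ℂ) * conj (A j k)
    have hBA : B * (Matrix.of A) = Matrix.diagonal (fun k => ((ℓ k + 2 : ℕ) : ℂ)) := by
      ext k l
      rw [Matrix.mul_apply, Matrix.diagonal_apply]
      exact hU k l
    have hdet : IsUnit B.det := by
      have h := congrArg Matrix.det hBA
      rw [Matrix.det_mul, Matrix.det_diagonal] at h
      have hne : ∏ k, ((ℓ k + 2 : ℕ) : ℂ) ≠ 0 :=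
        Finset.prod_ne_zero_iff.2 fun k _ => by exact_mod_cast (by omega : ℓ k + 2 ≠ 0)
      rw [← h] at hne
      exact (left_ne_zero_of_mul hne).isUnit
    have hinj := Matrix.mulVec_injective_iff_isUnit.2 ((Matrix.isUnit_iff_isUnit_det B).2 hdet)
    have : g u = (Matrix.of A).mulVec u := by
      apply hinj
      rw [Matrix.mulVec_mulVec, hBA]
      ext k
      rw [Matrix.mulVec_diagonal]
      exact e2 k u hu
    intro j
    rw [this]; rfl
  have hrow : ∀ j, ∑ k, ‖A j k‖ ≤ 1 := by
    intro j
    have key : ∀ r : ℝ, 0 ≤ r → r < 1 → r * ∑ k, ‖A j k‖ ≤ 1 := by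
      intro r hr0 hr1
      let u : Fin d → ℂ := fun k => r * (conj (A j k) / ‖A j k‖)
      have hu : u ∈ D := by
        intro k
        simp only [u, norm_mul, norm_div, RCLike.norm_conj, Complex.norm_real, norm_norm,
          Real.norm_of_nonneg hr0]
        have := div_self_le_one ‖A j k‖
        nlinarith
      have h1 := hgmap u hu j
      have h2 : g u j = ((r * ∑ k, ‖A j k‖ : ℝ) : ℂ) := by
        rw [hlin u hu j]
        push_cast
        rw [Finset.mul_sum]
        refine Finset.sum_congr rfl fun k _ => ?_
        by_cases hz : A j k = 0
        · simp [hz]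
        · have hn : (‖A j k‖ : ℂ) ≠ 0 := by simpa using hz
          simp only [u]
          have := Complex.mul_conj' (A j k)
          field_simp
          linear_combination (r : ℂ) * this
      rw [h2, Complex.norm_real] at h1
      exact (le_abs_self _).trans h1.le
    by_contra! h
    set S := ∑ k, ‖A j k‖
    have hS : 0 < S := by linarith
    have := key ((1 + S⁻¹) / 2) (by positivity) (by
      have := inv_lt_one_of_one_lt₀ h
      linarith)
    have h3 : (1 + S⁻¹) / 2 * S = (S + 1) / 2 := by field_simp
    linarith
  obtain ⟨φ, hφ1, hφ2⟩ := aux_mat (fun j => ℓ j + 2) (fun j => by omega) A hU hrow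
  refine ⟨f 0, fun κ => A κ (φ κ), φ, hc, hφ1, hfc, ?_⟩
  intro z hz κ
  rw [hlin z hz κ, Finset.sum_eq_single (φ κ)]
  · intro k _ hk
    rw [hφ2 κ k hk, zero_mul]
  · simp
end
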